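/- Let V: ℝ → ℝ be a polynomial of degree d ≥ 3 with V(0) = V'(0) = 0 and V''(0) = 1. For ν = 1, …, d−2 let B_ν := −V^{(ν+2)}(0) Σ_{j=0}^{⌊(ν−1)/2⌋+1} (i/2)^{2j} (1/((2j+1)! (ν+1−2j)!)) ξ^{ν+1−2j} ∂_η^{2j+1}, let L_h := η ∂_ξ − ξ ∂_η, and let L̃^ε := L_h + Σ_{ν=1}^{d−2} ε^{ν/2} B_ν. Let f̃_0 ∈ 𝒮(ℝ²) be independent of ε, and for ε ∈ (0,1] let W̃^ε(ξ,η,t) be a solution of ∂_t W̃^ε + L̃^ε W̃^ε = 0 with W̃^ε(·,·,0) = f̃_0 that is C¹ in t with W̃^ε(·,·,t) ∈ 𝒮(ℝ²) for each t ≥ 0. Define Z^{(0)}(·,·,t) := f̃_0 ∘ g_h^{−t} and, recursively for l ≥ 1, Z^{(l)}(z,t) := −∫_0^t Σ_{ν=1}^{min(l, d−2)} (B_ν Z^{(l−ν)})(g_h^{−(t−s)}(z), s) ds, where g_h^t is the harmonic flow. Then for every N ∈ ℕ there is a constant C_N, independent of ε and t, such that the remainder R^{N+1}(·,·,t) :=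 W̃^ε(·,·,t) − Σ_{l=0}^{N} ε^{l/2} Z^{(l)}(·,·,t) satisfies ‖R^{N+1}(·,·,t)‖_{L²(ℝ²)} ≤ C_N e^{t} ε^{(N+1)/2} for all t ≥ 0 and ε ∈ (0,1]. -/

import Mathlib

open MeasureTheory

/-- The harmonic-oscillator Hamiltonian flow. -/
noncomputable def gh (t : ℝ) : ℝ × ℝ → ℝ × ℝ := fun z =>
  (z.1 * Real.cos t + z.2 * Real.sin t, z.2 * Real.cos t - z.1 * Real.sin t)

/-- The correction operator
`B_ν = -V^{(ν+2)}(0) Σ_{j=0}^{⌊(ν-1)/2⌋+1} (i/2)^{2j} (1/((2j+1)!(ν+1-2j)!)) ξ^{ν+1-2j} ∂_η^{2j+1}`. -/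
noncomputable def Bop (V : ℝ → ℝ) (ν : ℕ) (f : ℝ × ℝ → ℂ) : ℝ × ℝ → ℂ := fun p =>
  -((iteratedDeriv (ν + 2) V 0 : ℝ) : ℂ) *
    ∑ j ∈ Finset.range ((ν - 1) / 2 + 2),
      (Complex.I / 2) ^ (2 * j) *
        ((1 : ℂ) / ((((2 * j + 1).factorial * (ν + 1 - 2 * j).factorial : ℕ) : ℝ) : ℂ)) *
        (p.1 : ℂ) ^ (ν + 1 - 2 * j) *
        iteratedDeriv (2 * j + 1) (fun η => f (p.1, η)) p.2

/-- The harmonic transport operator `L_h = η ∂_ξ - ξ ∂_η`. -/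
noncomputable def Lh (f : ℝ × ℝ → ℂ) : ℝ × ℝ → ℂ := fun p =>
  (p.2 : ℂ) * deriv (fun ξ => f (ξ, p.2)) p.1 - (p.1 : ℂ) * deriv (fun η => f (p.1, η)) p.2

/-!
The generator of the dilated Wigner equation is skew-symmetric on `L²`, so the norm of the remainder
is at most the time integral of the norm of the residual that the truncated expansion leaves in the
equation. The recursion for `Z^(l)` is Duhamel's formula for the hierarchy obtained by comparing
powers of `√ε`; hence the residual only contains terms of order at least `N + 1` in `√ε`. Every
`Z^(l)` is a finite sum of terms `h(t) (F ∘ g_h^{-t})` with `F` Schwartz and `h` of polynomial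
growth: this class is preserved by multiplication by `ξ`, by `∂_η` (which the flow rotates into the
other variable) and by Duhamel integration. So the residual grows polynomially in `t`, which `e^t`
absorbs.

The delicate point is that `W` is differentiable in time only pointwise in `(ξ, η)`. Differentiating
`‖R‖²` requires `t ↦ W(t)` to be locally Lipschitz in `L²`, that is, a locally uniform bound on the
norm of `A W`, where `A` is the generator. The sets of times where `max(‖W‖, ‖A W‖) ≤ c` are closed
and, for `c ∈ ℕ`, cover the time interval, so by Baire's theorem both norms are bounded on some
relatively open piece of every nonempty closed set of times. Applied to the set of times at which
local boundedness fails, this yields a contradiction, because both norms are conserved on the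
intervals in between.
-/

section BaireConstancy

open Set Filter Topology

variable {I : Set ℝ} {ℓ : ℝ → ℝ}

theorem bddAbove_image_of_isBoundedUnder_nhdsWithin {X : Type*} [TopologicalSpace X] {J K : Set X}
    {g : X → ℝ} (hK : IsCompact K) (hKJ : K ⊆ J)
    (hg : ∀ x ∈ K, IsBoundedUnder (· ≤ ·) (𝓝[J] x) g) : BddAbove (g '' K) := by
  refine hK.induction_on (p := fun S => BddAbove (g '' S)) (by simp)
    (fun S T hST hT => hT.mono (image_mono hST))
    (fun S T hS hT => by rw [image_union]; exact hS.union hT) fun x hx => ?_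
  obtain ⟨c, hc⟩ := hg x hx
  exact ⟨_, nhdsWithin_mono x hKJ (eventually_map.1 hc), c, forall_mem_image.2 fun _ => id⟩

theorem eq_of_forall_mem_Ioo_isBoundedUnder
    (hconst : ∀ a b, a ≤ b → Icc a b ⊆ I → BddAbove (ℓ '' Ioo a b) → ℓ a = ℓ b)
    {a b : ℝ} (hab : a ≤ b) (hI : Icc a b ⊆ I)
    (hbdd : ∀ t ∈ Ioo a b, IsBoundedUnder (· ≤ ·) (𝓝[I] t) ℓ) : ℓ a = ℓ b := by
  have eq_of_le : ∀ s ∈ Ioo a b, ∀ t ∈ Ioo a b, s ≤ t → ℓ s = ℓ t := fun s hs t ht hst => by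
    have hsub : Icc s t ⊆ Ioo a b := Icc_subset_Ioo hs.1 ht.2
    have hsubI := hsub.trans (Ioo_subset_Icc_self.trans hI)
    refine hconst s t hst hsubI (BddAbove.mono (image_mono Ioo_subset_Icc_self) ?_)
    exact bddAbove_image_of_isBoundedUnder_nhdsWithin isCompact_Icc hsubI
      fun x hx => hbdd x (hsub hx)
  have eq_of_mem : ∀ s ∈ Ioo a b, ∀ t ∈ Ioo a b, ℓ s = ℓ t := fun s hs t ht =>
    (le_total s t).elim (eq_of_le s hs t ht) fun hts => (eq_of_le t ht s hs hts).symm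
  refine hconst a b hab hI ?_
  rcases (Ioo a b).eq_empty_or_nonempty with hempty | ⟨m, hm⟩
  · simp [hempty]
  · exact ⟨ℓ m, forall_mem_image.2 fun t ht => (eq_of_mem t ht m hm).le⟩

theorem isOpen_setOf_isBoundedUnder_nhdsWithin {X : Type*} [TopologicalSpace X] (J : Set X)
    (g : X → ℝ) : IsOpen {x | IsBoundedUnder (· ≤ ·) (𝓝[J] x) g} := by
  refine isOpen_iff_mem_nhds.2 fun x ⟨c, hc⟩ => ?_
  filter_upwards [eventually_nhds_nhdsWithin.2 (eventually_map.1 hc)] with y hy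
  exact ⟨c, eventually_map.2 hy⟩

theorem exists_ball_forall_le_of_isClosed_sublevel {X : Type*} [MetricSpace X] [CompleteSpace X]
    {J K : Set X} {g : X → ℝ} (hK : IsClosed K) (hKJ : K ⊆ J) (hne : K.Nonempty)
    (hcl : ∀ c, IsClosed {x ∈ J | g x ≤ c}) :
    ∃ x ∈ K, ∃ δ > 0, ∃ c, ∀ y ∈ K, dist y x < δ → g y ≤ c := by
  have := hK.completeSpace_coe
  have := hne.to_subtype
  have hclK (n : ℕ) : IsClosed {x : K | g x ≤ n} := by
    convert (hcl n).preimage continuous_subtype_val using 1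
    ext x
    simp [hKJ x.2]
  obtain ⟨n, x, hx⟩ := nonempty_interior_of_iUnion_of_closed hclK
    (iUnion_eq_univ_iff.2 fun x => exists_nat_ge (g x))
  obtain ⟨δ, hδ, hball⟩ := Metric.mem_nhds_iff.1 (mem_interior_iff_mem_nhds.1 hx)
  exact ⟨x, x.2, δ, hδ, n, fun y hy hyx => hball (a := ⟨y, hy⟩) hyx⟩

theorem exists_first_mem_uIcc {K : Set ℝ} (hK : IsClosed K) {s k : ℝ} (hk : k ∈ K) :
    ∃ b ∈ K, b ∈ uIcc s k ∧ ∀ u ∈ K, u ∈ uIcc s b → u = b := by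
  obtain ⟨b, ⟨hbs, hbK⟩, hmin⟩ := (isCompact_uIcc.inter_right hK).exists_isMinOn
    (f := fun u => |u - s|) ⟨k, right_mem_uIcc, hk⟩ (by fun_prop : Continuous _).continuousOn
  refine ⟨b, hbK, hbs, fun u hu hus => ?_⟩
  have hle : |b - s| ≤ |u - s| :=
    isMinOn_iff.1 hmin u ⟨uIcc_subset_uIcc_left hbs hus, hu⟩
  rcases le_total s b with hsb | hbs
  · rw [uIcc_of_le hsb] at hus
    rw [abs_of_nonneg (by linarith), abs_of_nonneg (by linarith [hus.1])] at hle
    linarith [hus.2]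
  · rw [uIcc_of_ge hbs] at hus
    rw [abs_of_nonpos (by linarith), abs_of_nonpos (by linarith [hus.2])] at hle
    linarith [hus.1]

-- Near the set `K` where local boundedness fails, `ℓ s` is the value at the point of `K` met
-- first on the way from `s` to a given point of `K`, so a bound on `K` propagates off `K`.
theorem isBoundedUnder_nhdsWithin_of_isClosed_sublevel (hI : IsClosed I) (hord : I.OrdConnected)
    (hcl : ∀ c, IsClosed {t ∈ I | ℓ t ≤ c})
    (hconst : ∀ a b, a ≤ b → Icc a b ⊆ I → BddAbove (ℓ '' Ioo a b) → ℓ a = ℓ b)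
    {t : ℝ} (ht : t ∈ I) : IsBoundedUnder (· ≤ ·) (𝓝[I] t) ℓ := by
  set K := I \ {t | IsBoundedUnder (· ≤ ·) (𝓝[I] t) ℓ}
  have hK : IsClosed K := hI.sdiff (isOpen_setOf_isBoundedUnder_nhdsWithin I ℓ)
  suffices K = ∅ by
    by_contra hcon
    exact this.subset ⟨ht, hcon⟩
  by_contra! hne
  obtain ⟨k, hkK, δ, hδ, c, hc⟩ :=
    exists_ball_forall_le_of_isClosed_sublevel hK sdiff_subset hne hcl
  refine hkK.2 ⟨c, eventually_map.2 ?_⟩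
  filter_upwards [self_mem_nhdsWithin, mem_nhdsWithin_of_mem_nhds (Metric.ball_mem_nhds k hδ)]
    with s hsI hs
  obtain ⟨b, hbK, hbs, hfirst⟩ := exists_first_mem_uIcc hK (s := s) hkK
  have hbound : ℓ b ≤ c := hc b hbK ((Real.dist_right_le_of_mem_uIcc hbs).trans_lt hs)
  have hgood : ∀ u ∈ uIcc s b, u ≠ b → IsBoundedUnder (· ≤ ·) (𝓝[I] u) ℓ := fun u hu hub => by
    by_contra hcon
    exact hub (hfirst u ⟨hord.uIcc_subset hsI hbK.1 hu, hcon⟩ hu)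
  have hsub := hord.uIcc_subset hsI hbK.1
  rcases le_total s b with hsb | hbs
  · rw [uIcc_of_le hsb] at hgood hsub
    refine (eq_of_forall_mem_Ioo_isBoundedUnder hconst hsb hsub fun u hu => ?_).trans_le hbound
    exact hgood u (Ioo_subset_Icc_self hu) hu.2.ne
  · rw [uIcc_of_ge hbs] at hgood hsub
    refine (eq_of_forall_mem_Ioo_isBoundedUnder hconst hbs hsub fun u hu => ?_).ge.trans hbound
    exact hgood u (Ioo_subset_Icc_self hu) hu.1.ne'

theorem eq_of_isClosed_sublevel (hI : IsClosed I) (hord : I.OrdConnected)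
    (hcl : ∀ c, IsClosed {t ∈ I | ℓ t ≤ c})
    (hconst : ∀ a b, a ≤ b → Icc a b ⊆ I → BddAbove (ℓ '' Ioo a b) → ℓ a = ℓ b)
    {a b : ℝ} (ha : a ∈ I) (hb : b ∈ I) (hab : a ≤ b) : ℓ a = ℓ b :=
  have hsub := hord.out ha hb
  eq_of_forall_mem_Ioo_isBoundedUnder hconst hab hsub fun _ hu =>
    isBoundedUnder_nhdsWithin_of_isClosed_sublevel hI hord hcl hconst
      (hsub (Ioo_subset_Icc_self hu))

end BaireConstancy

section HilbertEnergy

open Set Filter Topology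

variable {𝕜 H : Type*} [RCLike 𝕜] [NormedAddCommGroup H] [InnerProductSpace 𝕜 H]

theorem hasDerivWithinAt_norm_sq_of_re_inner {X : ℝ → H} {s : Set ℝ} {t M d : ℝ} (ht : t ∈ s)
    (hLip : ∀ r ∈ s, ‖X r - X t‖ ≤ M * |r - t|)
    (hd : HasDerivWithinAt (fun r => RCLike.re (inner 𝕜 (X r) (X t))) d s t) :
    HasDerivWithinAt (fun r => ‖X r‖ ^ 2) (2 * d) s t := by
  have hsq : HasDerivWithinAt (fun r => ‖X r - X t‖ ^ 2) 0 s t := by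
    suffices h : (fun r => ‖X r - X t‖ ^ 2) =O[𝓝[s] t] fun r => ‖r - t‖ ^ 2 by
      simpa using (h.hasFDerivWithinAt (𝕜 := ℝ) ht one_lt_two).hasDerivWithinAt
    refine .of_bound (M ^ 2) ?_
    filter_upwards [self_mem_nhdsWithin] with r hr
    simpa [mul_pow] using pow_le_pow_left₀ (norm_nonneg _) (hLip r hr) 2
  have hpolar (r : ℝ) : ‖X r‖ ^ 2
      = (‖X r - X t‖ ^ 2 + 2 * RCLike.re (inner 𝕜 (X r) (X t))) - ‖X t‖ ^ 2 := by
    linarith [norm_sub_sq (𝕜 := 𝕜) (X r) (X t)]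
  have hsum := (hsq.fun_add (hd.const_mul 2)).sub_const (‖X t‖ ^ 2)
  rw [zero_add] at hsum
  exact hsum.congr (fun r _ => hpolar r) (hpolar t)

theorem abs_sqrt_sub_sqrt_le_of_abs_deriv_le {z z' : ℝ → ℝ} {a b c : ℝ} (hab : a ≤ b)
    (hz : ∀ t ∈ Icc a b, 0 ≤ z t) (hd : ∀ t ∈ Icc a b, HasDerivWithinAt z (z' t) (Icc a b) t)
    (hc : 0 ≤ c) (hz' : ∀ t ∈ Icc a b, |z' t| ≤ 2 * c * √(z t)) :
    |√(z b) - √(z a)| ≤ c * (b - a) := by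
  have hreg : ∀ δ > 0, |√(z b + δ) - √(z a + δ)| ≤ c * (b - a) := fun δ hδ => by
    have hpos : ∀ t ∈ Icc a b, 0 < z t + δ := fun t ht => add_pos_of_nonneg_of_pos (hz t ht) hδ
    have hmv := (convex_Icc a b).norm_image_sub_le_of_norm_hasDerivWithin_le
      (f := fun t => √(z t + δ)) (C := c)
      (fun t ht => ((hd t ht).add_const δ).sqrt (hpos t ht).ne')
      (fun t ht => by
        have hsqrt : 0 < 2 * √(z t + δ) := mul_pos two_pos (Real.sqrt_pos.2 (hpos t ht))
        rw [Real.norm_eq_abs, abs_div, abs_of_pos hsqrt, div_le_iff₀ hsqrt]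
        calc |z' t| ≤ 2 * c * √(z t) := hz' t ht
          _ ≤ 2 * c * √(z t + δ) := by gcongr; linarith
          _ = c * (2 * √(z t + δ)) := by ring)
      (left_mem_Icc.2 hab) (right_mem_Icc.2 hab)
    rwa [Real.norm_eq_abs, Real.norm_eq_abs, abs_of_nonneg (sub_nonneg.2 hab)] at hmv
  have hlim : Tendsto (fun δ => |√(z b + δ) - √(z a + δ)|) (𝓝[>] 0) (𝓝 |√(z b) - √(z a)|) := by
    have hcont : Continuous fun δ => |√(z b + δ) - √(z a + δ)| := by fun_prop
    simpa using (hcont.tendsto 0).mono_left nhdsWithin_le_nhds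
  exact le_of_tendsto hlim (eventually_mem_nhdsWithin.mono hreg)

theorem abs_norm_sub_norm_le_of_re_inner_deriv_le {X : ℝ → H} {D : ℝ → ℝ} {a b c M : ℝ}
    (hab : a ≤ b) (hLip : ∀ r ∈ Icc a b, ∀ t ∈ Icc a b, ‖X r - X t‖ ≤ M * |r - t|)
    (hd : ∀ t ∈ Icc a b,
      HasDerivWithinAt (fun r => RCLike.re (inner 𝕜 (X r) (X t))) (D t) (Icc a b) t)
    (hc : 0 ≤ c) (hD : ∀ t ∈ Icc a b, |D t| ≤ c * ‖X t‖) :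
    |‖X b‖ - ‖X a‖| ≤ c * (b - a) := by
  have h := abs_sqrt_sub_sqrt_le_of_abs_deriv_le (z := fun t => ‖X t‖ ^ 2) hab
    (fun t _ => sq_nonneg _)
    (fun t ht => hasDerivWithinAt_norm_sq_of_re_inner ht (fun r hr => hLip r hr t ht) (hd t ht))
    hc fun t ht => by
      rw [Real.sqrt_sq (norm_nonneg _), abs_mul, abs_two]
      linarith [hD t ht]
  simpa only [Real.sqrt_sq (norm_nonneg _)] using h

end HilbertEnergy

section WeakConvergence

open Filter Topology

variable {α ι 𝕜 F : Type*} {mα : MeasurableSpace α} {μ : Measure α} {l : Filter ι}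
  [l.IsCountablyGenerated] [NormedAddCommGroup F] {f : ι → α → F} {g h : α → F} {C : ℝ}

-- AM-GM: `‖f n‖ ‖h‖ - κ ‖f n‖ ^ 2 ≤ ‖h‖ ^ 2 / (4 κ)`, which is an integrable majorant.
theorem tendsto_integral_max_norm_mul_norm_sub_zero (hf : ∀ n, MemLp (f n) 2 μ)
    (hh : MemLp h 2 μ) (hlim : ∀ᵐ x ∂μ, Tendsto (fun n => f n x) l (𝓝 0)) {κ : ℝ} (hκ : 0 < κ) :
    Tendsto (fun n => ∫ x, max (‖f n x‖ * ‖h x‖ - κ * ‖f n x‖ ^ 2) 0 ∂μ) l (𝓝 0) := by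
  suffices Tendsto (fun n => ∫ x, max (‖f n x‖ * ‖h x‖ - κ * ‖f n x‖ ^ 2) 0 ∂μ) l
      (𝓝 (∫ _, (0 : ℝ) ∂μ)) by simpa using this
  refine tendsto_integral_filter_of_dominated_convergence (fun x => ‖h x‖ ^ 2 / (4 * κ))
    (.of_forall fun n => ?_) (.of_forall fun n => ae_of_all _ fun x => ?_)
    ((hh.integrable_norm_pow two_ne_zero).div_const _) ?_
  · have := (hf n).aestronglyMeasurable.norm
    have := hh.aestronglyMeasurable.norm
    fun_prop
  · rw [Real.norm_of_nonneg (le_max_right _ _)]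
    refine max_le ?_ (by positivity)
    rw [le_div_iff₀ (by positivity)]
    linarith [sq_nonneg (‖h x‖ - 2 * κ * ‖f n x‖)]
  · filter_upwards [hlim] with x hx
    simpa using ((hx.norm.mul_const ‖h x‖).sub ((hx.norm.pow 2).const_mul κ)).max
      (tendsto_const_nhds (x := (0 : ℝ)))

theorem tendsto_integral_norm_mul_norm_zero (hf : ∀ n, MemLp (f n) 2 μ) (hh : MemLp h 2 μ)
    (hC : ∀ᶠ n in l, ∫ x, ‖f n x‖ ^ 2 ∂μ ≤ C)
    (hlim : ∀ᵐ x ∂μ, Tendsto (fun n => f n x) l (𝓝 0)) :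
    Tendsto (fun n => ∫ x, ‖f n x‖ * ‖h x‖ ∂μ) l (𝓝 0) := by
  refine Metric.tendsto_nhds.2 fun ε hε => ?_
  set κ := ε / (2 * (|C| + 1))
  have hκ : 0 < κ := by positivity
  have hκC : κ * C < ε / 2 := by
    calc κ * C < κ * (|C| + 1) := by gcongr; linarith [le_abs_self C]
      _ = ε / 2 := by simp only [κ]; field_simp
  have hexcess := tendsto_integral_max_norm_mul_norm_sub_zero hf hh hlim hκ
  filter_upwards [hC, hexcess.eventually_lt_const (half_pos hε)] with n hCn hn
  have hsq : Integrable (fun x => κ * ‖f n x‖ ^ 2) μ :=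
    ((hf n).integrable_norm_pow two_ne_zero).const_mul κ
  have hmul : Integrable (fun x => ‖f n x‖ * ‖h x‖) μ := (hf n).norm.integrable_mul hh.norm
  have hmax : Integrable (fun x => max (‖f n x‖ * ‖h x‖ - κ * ‖f n x‖ ^ 2) 0) μ :=
    (hmul.sub hsq).pos_part
  rw [Real.dist_0_eq_abs, abs_of_nonneg (integral_nonneg fun x => by positivity)]
  calc ∫ x, ‖f n x‖ * ‖h x‖ ∂μ
      ≤ ∫ x, κ * ‖f n x‖ ^ 2 + max (‖f n x‖ * ‖h x‖ - κ * ‖f n x‖ ^ 2) 0 ∂μ :=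
        integral_mono hmul (hsq.add hmax) fun x => by
          linarith [le_max_left (‖f n x‖ * ‖h x‖ - κ * ‖f n x‖ ^ 2) 0]
    _ = κ * ∫ x, ‖f n x‖ ^ 2 ∂μ + ∫ x, max (‖f n x‖ * ‖h x‖ - κ * ‖f n x‖ ^ 2) 0 ∂μ := by
        rw [integral_add hsq hmax, integral_const_mul]
    _ < ε := by linarith [mul_le_mul_of_nonneg_left hCn hκ.le]

theorem integrable_inner_of_memLp [RCLike 𝕜] [InnerProductSpace 𝕜 F] (hg : MemLp g 2 μ)
    (hh : MemLp h 2 μ) : Integrable (fun x => inner 𝕜 (g x) (h x)) μ :=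
  (hg.norm.integrable_mul hh.norm).mono' (hg.1.inner hh.1)
    (ae_of_all _ fun _ => norm_inner_le_norm _ _)

theorem tendsto_integral_inner_of_tendsto_ae [RCLike 𝕜] [InnerProductSpace 𝕜 F]
    (hf : ∀ n, MemLp (f n) 2 μ) (hg : MemLp g 2 μ) (hh : MemLp h 2 μ)
    (hC : ∀ᶠ n in l, ∫ x, ‖f n x‖ ^ 2 ∂μ ≤ C)
    (hlim : ∀ᵐ x ∂μ, Tendsto (fun n => f n x) l (𝓝 (g x))) :
    Tendsto (fun n => ∫ x, inner 𝕜 (f n x) (h x) ∂μ) l (𝓝 (∫ x, inner 𝕜 (g x) (h x) ∂μ)) := by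
  have hdiff : Tendsto (fun n => ∫ x, ‖(f n - g) x‖ * ‖h x‖ ∂μ) l (𝓝 0) := by
    refine tendsto_integral_norm_mul_norm_zero (C := 2 * C + 2 * ∫ x, ‖g x‖ ^ 2 ∂μ)
      (fun n => (hf n).sub hg) hh ?_ ?_
    · filter_upwards [hC] with n hCn
      have hf2 := ((hf n).integrable_norm_pow two_ne_zero).const_mul 2
      have hg2 := (hg.integrable_norm_pow two_ne_zero).const_mul 2
      calc ∫ x, ‖(f n - g) x‖ ^ 2 ∂μ ≤ ∫ x, 2 * ‖f n x‖ ^ 2 + 2 * ‖g x‖ ^ 2 ∂μ :=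
            integral_mono (((hf n).sub hg).integrable_norm_pow two_ne_zero) (hf2.add hg2)
              fun x => by
                have := pow_le_pow_left₀ (norm_nonneg _) (norm_sub_le (f n x) (g x)) 2
                simpa [mul_add] using this.trans add_sq_le
        _ ≤ _ := by
            rw [integral_add hf2 hg2, integral_const_mul, integral_const_mul]
            linarith
    · filter_upwards [hlim] with x hx
      simpa using hx.sub_const (g x)
  refine tendsto_iff_norm_sub_tendsto_zero.2
    (squeeze_zero (fun _ => norm_nonneg _) (fun n => ?_) hdiff)
  rw [← integral_sub (integrable_inner_of_memLp (hf n) hh) (integrable_inner_of_memLp hg hh)]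
  refine norm_integral_le_of_norm_le (((hf n).sub hg).norm.integrable_mul hh.norm)
    (ae_of_all _ fun x => ?_)
  rw [← inner_sub_left]
  exact norm_inner_le_norm _ _

end WeakConvergence

section MeanValue

open Set Filter Topology ENNReal

variable {α F : Type*} {mα : MeasurableSpace α} {μ : Measure α} [NormedAddCommGroup F]

theorem rpow_lintegral_enorm_le {f : α → F} (hf : AEStronglyMeasurable f μ) {p : ℝ} (hp : 1 ≤ p) :
    (∫⁻ x, ‖f x‖ₑ ∂μ) ^ p ≤ μ univ ^ (p - 1) * ∫⁻ x, ‖f x‖ₑ ^ p ∂μ := by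
  have hp0 : 0 < p := one_pos.trans_le hp
  have h := ENNReal.rpow_le_rpow
    (eLpNorm'_le_eLpNorm'_mul_rpow_measure_univ one_pos hp hf) hp0.le
  rw [ENNReal.mul_rpow_of_nonneg _ _ hp0.le, ← lintegral_rpow_enorm_eq_rpow_eLpNorm' hp0,
    ← ENNReal.rpow_mul, mul_comm] at h
  simpa [eLpNorm', sub_mul, hp0.ne'] using h

variable [NormedSpace ℝ F]

theorem aestronglyMeasurable_uncurry_of_hasDerivWithinAt [SFinite μ] {φ ψ : ℝ → α → F} {a b : ℝ}
    (hφ : ∀ t ∈ Icc a b, StronglyMeasurable (φ t))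
    (hd : ∀ t ∈ Icc a b, ∀ x, HasDerivWithinAt (fun r => φ r x) (ψ t x) (Icc a b) t) :
    AEStronglyMeasurable (Function.uncurry ψ) ((volume.restrict (Ioo a b)).prod μ) := by
  rcases lt_or_ge a b with hab | hba
  swap
  · simp [Ioo_eq_empty_of_le hba]
  have hproj : StronglyMeasurable fun q : ℝ × α => φ (projIcc a b hab.le q.1) q.2 := by
    refine stronglyMeasurable_uncurry_of_continuous_of_stronglyMeasurable
      (u := fun τ x => φ (projIcc a b hab.le τ) x) (fun x => ?_) fun τ => hφ _ (Subtype.prop _)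
    exact ContinuousOn.comp_continuous (fun t ht => (hd t ht x).continuousWithinAt)
      (continuous_subtype_val.comp continuous_projIcc) fun τ => Subtype.prop _
  set δ : ℕ → ℝ := fun n => 1 / ((n : ℝ) + 1)
  refine aestronglyMeasurable_of_tendsto_ae atTop (f := fun n q =>
    (δ n)⁻¹ • (φ (projIcc a b hab.le (q.1 + δ n)) q.2 - φ (projIcc a b hab.le q.1) q.2))
    (fun n => (((hproj.comp_measurable (g := fun q : ℝ × α => (q.1 + δ n, q.2))
      (by fun_prop)).sub hproj).const_smul _).aestronglyMeasurable) ?_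
  filter_upwards [Measure.quasiMeasurePreserving_fst.ae (ae_restrict_mem measurableSet_Ioo)]
    with ⟨τ, x⟩ hτ
  have hslope := hasDerivAt_iff_tendsto_slope.1
    ((hd τ (Ioo_subset_Icc_self hτ) x).hasDerivAt (Icc_mem_nhds hτ.1 hτ.2))
  have hseq : Tendsto (fun n => τ + δ n) atTop (𝓝[≠] τ) := by
    refine tendsto_nhdsWithin_iff.2 ⟨?_, .of_forall fun n => ?_⟩
    · simpa [δ] using tendsto_one_div_add_atTop_nhds_zero_nat.const_add τ
    · simpa [δ] using n.cast_add_one_ne_zero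
  refine (hslope.comp hseq).congr' ?_
  filter_upwards [(hseq.mono_right nhdsWithin_le_nhds).eventually_mem (Icc_mem_nhds hτ.1 hτ.2)]
    with n hn
  simp [slope_def_module, projIcc_of_mem hab.le hn, projIcc_of_mem hab.le (Ioo_subset_Icc_self hτ)]

theorem enorm_sub_le_lintegral_of_hasDerivWithinAt [CompleteSpace F] {f f' : ℝ → F} {a b : ℝ}
    (hab : a ≤ b) (hd : ∀ t ∈ Icc a b, HasDerivWithinAt f (f' t) (Icc a b) t)
    (hf' : AEStronglyMeasurable f' (volume.restrict (Ioo a b))) :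
    ‖f b - f a‖ₑ ≤ ∫⁻ t in Ioo a b, ‖f' t‖ₑ := by
  rcases eq_or_ne (∫⁻ t in Ioo a b, ‖f' t‖ₑ) ∞ with htop | hfin
  · simp [htop]
  have hintegrable : IntervalIntegrable f' volume a b := by
    rw [intervalIntegrable_iff_integrableOn_Ioo_of_le hab]
    exact ⟨hf', hfin.lt_top⟩
  have hftc := intervalIntegral.integral_eq_sub_of_hasDeriv_right_of_le hab
    (fun t ht => (hd t ht).continuousWithinAt)
    (fun t ht => ((hd t (Ioo_subset_Icc_self ht)).hasDerivAt
      (Icc_mem_nhds ht.1 ht.2)).hasDerivWithinAt) hintegrable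
  rw [← hftc, intervalIntegral.integral_of_le hab, integral_Ioc_eq_integral_Ioo]
  exact enorm_integral_le_lintegral_enorm _

theorem eLpNorm_sub_le_of_hasDerivWithinAt [SFinite μ] [CompleteSpace F] {φ ψ : ℝ → α → F}
    {a b : ℝ} {p M : ℝ≥0∞} (hab : a ≤ b) (hp : 1 ≤ p) (hp' : p ≠ ∞)
    (hφ : ∀ t ∈ Icc a b, StronglyMeasurable (φ t))
    (hd : ∀ t ∈ Icc a b, ∀ x, HasDerivWithinAt (fun r => φ r x) (ψ t x) (Icc a b) t)
    (hM : ∀ t ∈ Ioo a b, eLpNorm (ψ t) p μ ≤ M) :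
    eLpNorm (φ b - φ a) p μ ≤ M * ENNReal.ofReal (b - a) := by
  have hmeas := aestronglyMeasurable_uncurry_of_hasDerivWithinAt (μ := μ) hφ hd
  simp only [eLpNorm_eq_eLpNorm' (one_pos.trans_le hp).ne' hp'] at hM ⊢
  have hq : 1 ≤ p.toReal := by simpa using ENNReal.toReal_mono hp' hp
  generalize p.toReal = q at hM hq ⊢
  have hq0 : 0 < q := one_pos.trans_le hq
  set ν := volume.restrict (Ioo a b)
  have hν : ν univ = ENNReal.ofReal (b - a) := by simp [ν]
  have hpt : ∀ᵐ x ∂μ, ‖φ b x - φ a x‖ₑ ^ q ≤ ν univ ^ (q - 1) * ∫⁻ τ, ‖ψ τ x‖ₑ ^ q ∂ν := by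
    filter_upwards [hmeas.prodMk_right] with x hx
    refine le_trans ?_ (rpow_lintegral_enorm_le hx hq)
    gcongr
    exact enorm_sub_le_lintegral_of_hasDerivWithinAt hab (fun t ht => hd t ht x) hx
  have hslice : ∀ᵐ τ ∂ν, ∫⁻ x, ‖ψ τ x‖ₑ ^ q ∂μ ≤ M ^ q := by
    filter_upwards [ae_restrict_mem measurableSet_Ioo] with τ hτ
    rw [lintegral_rpow_enorm_eq_rpow_eLpNorm' hq0]
    gcongr
    exact hM τ hτ
  have hν_rpow : ν univ ^ (q - 1) * ν univ = ν univ ^ q := by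
    simpa using (ENNReal.rpow_add_of_nonneg (x := ν univ) (q - 1) 1 (by linarith) zero_le_one).symm
  refine (ENNReal.rpow_le_rpow_iff hq0).1 ?_
  rw [← lintegral_rpow_enorm_eq_rpow_eLpNorm' hq0, ENNReal.mul_rpow_of_nonneg _ _ hq0.le, ← hν]
  calc ∫⁻ x, ‖(φ b - φ a) x‖ₑ ^ q ∂μ
      ≤ ∫⁻ x, ν univ ^ (q - 1) * ∫⁻ τ, ‖ψ τ x‖ₑ ^ q ∂ν ∂μ := lintegral_mono_ae hpt
    _ = ν univ ^ (q - 1) * ∫⁻ x, ∫⁻ τ, ‖ψ τ x‖ₑ ^ q ∂ν ∂μ :=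
        lintegral_const_mul' _ _ (ENNReal.rpow_ne_top_of_nonneg (sub_nonneg.2 hq) (by simp [hν]))
    _ = ν univ ^ (q - 1) * ∫⁻ τ, ∫⁻ x, ‖ψ τ x‖ₑ ^ q ∂μ ∂ν := by
        rw [← lintegral_lintegral_swap (hmeas.enorm.pow_const q)]
    _ ≤ ν univ ^ (q - 1) * (M ^ q * ν univ) := by
        gcongr
        simpa using lintegral_mono_ae hslice
    _ = M ^ q * ν univ ^ q := by rw [mul_left_comm, hν_rpow]

end MeanValue

section PointwiseDerivative

open Set
open scoped SchwartzMap

variable {E F : Type*} [NormedAddCommGroup E] [NormedSpace ℝ E] [NormedAddCommGroup F]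
  [NormedSpace ℝ F]

/-- The curve `φ` of Schwartz functions is differentiable on `s` with derivative `ψ`, pointwise in
the space variable: no convergence of difference quotients in a function space is asked for. -/
def HasPointwiseDerivOn (φ ψ : ℝ → 𝓢(E, F)) (s : Set ℝ) : Prop :=
  ∀ t ∈ s, ∀ x, HasDerivWithinAt (fun r => φ r x) (ψ t x) s t

namespace HasPointwiseDerivOn

variable {φ ψ φ' ψ' : ℝ → 𝓢(E, F)} {s s' : Set ℝ}

theorem mono (h : HasPointwiseDerivOn φ ψ s) (hs : s' ⊆ s) : HasPointwiseDerivOn φ ψ s' :=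
  fun t ht x => (h t (hs ht) x).mono hs

theorem sub (h : HasPointwiseDerivOn φ ψ s) (h' : HasPointwiseDerivOn φ' ψ' s) :
    HasPointwiseDerivOn (fun t => φ t - φ' t) (fun t => ψ t - ψ' t) s :=
  fun t ht x => (h t ht x).sub (h' t ht x)

theorem sub_const (h : HasPointwiseDerivOn φ ψ s) (f : 𝓢(E, F)) :
    HasPointwiseDerivOn (fun t => φ t - f) ψ s :=
  fun t ht x => (h t ht x).sub_const (f x)

theorem comp_add_const (h : HasPointwiseDerivOn φ ψ s) {τ : ℝ} (hs : MapsTo (· + τ) s' s) :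
    HasPointwiseDerivOn (fun t => φ (t + τ)) (fun t => ψ (t + τ)) s' := fun t ht x => by
  simpa [Function.comp_def] using
    (h (t + τ) (hs ht) x).scomp t ((hasDerivWithinAt_id t s').add_const τ) hs

end HasPointwiseDerivOn

end PointwiseDerivative

section SchwartzCurves

open Set Filter Topology
open scoped SchwartzMap

variable {E F : Type*} [NormedAddCommGroup E] [NormedSpace ℝ E] [FiniteDimensional ℝ E]
  [MeasurableSpace E] [BorelSpace E] [NormedAddCommGroup F] [InnerProductSpace ℂ F]
  {μ : Measure E} [μ.HasTemperateGrowth]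

variable (μ) in
/-- The embedding of Schwartz functions into `L²(μ)`, the space in which all estimates are made. -/
noncomputable def schwartzToL2 : 𝓢(E, F) →L[ℂ] Lp F 2 μ :=
  SchwartzMap.toLpCLM ℂ F 2 μ

theorem inner_schwartzToL2 (f g : 𝓢(E, F)) :
    inner ℂ (schwartzToL2 μ f) (schwartzToL2 μ g) = ∫ x, inner ℂ (f x) (g x) ∂μ :=
  SchwartzMap.inner_toL2_toL2_eq f g μ

theorem enorm_schwartzToL2 (f : 𝓢(E, F)) : ‖schwartzToL2 μ f‖ₑ = eLpNorm f 2 μ := by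
  rw [← ofReal_norm, schwartzToL2, SchwartzMap.toLpCLM_apply, SchwartzMap.norm_toLp,
    ENNReal.ofReal_toReal (f.memLp 2 μ).eLpNorm_ne_top]

theorem norm_sq_schwartzToL2 (f : 𝓢(E, F)) :
    ‖schwartzToL2 μ f‖ ^ 2 = ∫ x, ‖f x‖ ^ 2 ∂μ := by
  refine Complex.ofReal_injective ?_
  have h := inner_schwartzToL2 (μ := μ) f f
  simp only [inner_self_eq_norm_sq_to_K, Complex.coe_algebraMap] at h
  simpa only [← Complex.ofReal_pow, integral_complex_ofReal] using h

theorem tendsto_inner_schwartzToL2 {ι : Type*} {l : Filter ι} [l.IsCountablyGenerated]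
    {f : ι → 𝓢(E, F)} {g : 𝓢(E, F)} {M : ℝ} (hM : ∀ᶠ n in l, ‖schwartzToL2 μ (f n)‖ ≤ M)
    (hlim : ∀ x, Tendsto (fun n => f n x) l (𝓝 (g x))) (h : 𝓢(E, F)) :
    Tendsto (fun n => inner ℂ (schwartzToL2 μ (f n)) (schwartzToL2 μ h)) l
      (𝓝 (inner ℂ (schwartzToL2 μ g) (schwartzToL2 μ h))) := by
  simp only [inner_schwartzToL2]
  refine tendsto_integral_inner_of_tendsto_ae (C := M ^ 2) (fun n => (f n).memLp 2 μ)
    (g.memLp 2 μ) (h.memLp 2 μ) ?_ (ae_of_all _ hlim)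
  filter_upwards [hM] with n hn
  rw [← norm_sq_schwartzToL2]
  gcongr

theorem norm_le_of_tendsto_inner {𝕜 H ι : Type*} [RCLike 𝕜] [NormedAddCommGroup H]
    [InnerProductSpace 𝕜 H] {l : Filter ι} [l.NeBot] {u : ι → H} {v : H} {C : ℝ}
    (hC : ∀ᶠ n in l, ‖u n‖ ≤ C)
    (hlim : Tendsto (fun n => inner 𝕜 (u n) v) l (𝓝 (inner 𝕜 v v))) : ‖v‖ ≤ C := by
  have hsq : ‖v‖ * ‖v‖ ≤ C * ‖v‖ := by
    rw [← inner_self_eq_norm_mul_norm (𝕜 := 𝕜)]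
    refine (RCLike.re_le_norm _).trans (le_of_tendsto hlim.norm ?_)
    filter_upwards [hC] with n hn
    exact (norm_inner_le_norm _ _).trans (by gcongr)
  obtain ⟨n, hn⟩ := hC.exists
  rcases (norm_nonneg v).eq_or_lt with hv | hv
  · exact hv ▸ (norm_nonneg _).trans hn
  · exact le_of_mul_le_mul_right hsq hv

theorem eventually_norm_slope_le {H : Type*} [NormedAddCommGroup H] [NormedSpace ℝ H] {X : ℝ → H}
    {s : Set ℝ} {t M : ℝ} (hM : ∀ᶠ r in 𝓝[s] t, ‖X r - X t‖ ≤ M * |r - t|) :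
    ∀ᶠ r in 𝓝[s \ {t}] t, ‖slope X t r‖ ≤ M := by
  filter_upwards [self_mem_nhdsWithin, nhdsWithin_mono _ sdiff_subset hM] with r hr hrM
  have hrt : 0 < |r - t| := abs_pos.2 (sub_ne_zero.2 hr.2)
  rwa [slope_def_module, norm_smul, norm_inv, Real.norm_eq_abs, inv_mul_le_iff₀ hrt, mul_comm]

variable (μ) in
/-- `B` is a formal adjoint of `A` with respect to the `L²(μ)` inner product on Schwartz functions;
`IsFormalAdjoint μ A A` says that `A` is symmetric and `IsFormalAdjoint μ A (-A)` that it is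
skew-symmetric. -/
def IsFormalAdjoint (A B : Module.End ℂ 𝓢(E, F)) : Prop :=
  ∀ f g, inner ℂ (schwartzToL2 μ (A f)) (schwartzToL2 μ g) =
    inner ℂ (schwartzToL2 μ f) (schwartzToL2 μ (B g))

namespace IsFormalAdjoint

variable {A B : Module.End ℂ 𝓢(E, F)}

theorem re_inner_self_eq_zero (hA : IsFormalAdjoint μ A (-A)) (f : 𝓢(E, F)) :
    (inner ℂ (schwartzToL2 μ (A f)) (schwartzToL2 μ f)).re = 0 := by
  have h := congrArg Complex.re (hA f f)
  rw [LinearMap.neg_apply, map_neg, inner_neg_right, Complex.neg_re,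
    ← inner_conj_symm (schwartzToL2 μ f), Complex.conj_re] at h
  linarith

theorem norm_schwartzToL2_apply_le_of_tendsto (hA : IsFormalAdjoint μ A B) {ι : Type*}
    {l : Filter ι} [l.IsCountablyGenerated] [l.NeBot] {f : ι → 𝓢(E, F)} {g : 𝓢(E, F)} {M C : ℝ}
    (hM : ∀ᶠ n in l, ‖schwartzToL2 μ (f n)‖ ≤ M)
    (hC : ∀ᶠ n in l, ‖schwartzToL2 μ (A (f n))‖ ≤ C)
    (hlim : ∀ x, Tendsto (fun n => f n x) l (𝓝 (g x))) :
    ‖schwartzToL2 μ (A g)‖ ≤ C := by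
  refine norm_le_of_tendsto_inner (𝕜 := ℂ) hC ?_
  simpa only [hA _ (A g)] using tendsto_inner_schwartzToL2 hM hlim (B (A g))

end IsFormalAdjoint

namespace HasPointwiseDerivOn

variable {φ ψ : ℝ → 𝓢(E, F)} {s : Set ℝ} {t a b M : ℝ}

theorem tendsto_inner_slope (h : HasPointwiseDerivOn φ ψ s) (ht : t ∈ s)
    (hM : ∀ᶠ r in 𝓝[s] t, ‖schwartzToL2 μ (φ r) - schwartzToL2 μ (φ t)‖ ≤ M * |r - t|)
    (f : 𝓢(E, F)) :
    Tendsto (fun r => inner ℂ (slope (fun r => schwartzToL2 μ (φ r)) t r) (schwartzToL2 μ f))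
      (𝓝[s \ {t}] t) (𝓝 (inner ℂ (schwartzToL2 μ (ψ t)) (schwartzToL2 μ f))) := by
  have hslope : ∀ r, slope (fun r => schwartzToL2 μ (φ r)) t r = schwartzToL2 μ (slope φ t r) :=
    fun r => by simp [slope_def_module]
  have hbdd := eventually_norm_slope_le hM
  simp only [hslope] at hbdd ⊢
  exact tendsto_inner_schwartzToL2 hbdd (fun x =>
    (hasDerivWithinAt_iff_tendsto_slope.1 (h t ht x)).congr fun r => by simp [slope_def_module]) f

theorem norm_schwartzToL2_deriv_le (h : HasPointwiseDerivOn φ ψ s) (ht : t ∈ s)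
    (hacc : AccPt t (𝓟 s))
    (hM : ∀ᶠ r in 𝓝[s] t, ‖schwartzToL2 μ (φ r) - schwartzToL2 μ (φ t)‖ ≤ M * |r - t|) :
    ‖schwartzToL2 μ (ψ t)‖ ≤ M :=
  have : (𝓝[s \ {t}] t).NeBot := accPt_principal_iff_nhdsWithin.1 hacc
  norm_le_of_tendsto_inner (𝕜 := ℂ) (eventually_norm_slope_le hM)
    (h.tendsto_inner_slope ht hM (ψ t))

theorem hasDerivWithinAt_re_inner (h : HasPointwiseDerivOn φ ψ s) (ht : t ∈ s)
    (hM : ∀ᶠ r in 𝓝[s] t, ‖schwartzToL2 μ (φ r) - schwartzToL2 μ (φ t)‖ ≤ M * |r - t|)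
    (f : 𝓢(E, F)) :
    HasDerivWithinAt (fun r => (inner ℂ (schwartzToL2 μ (φ r)) (schwartzToL2 μ f)).re)
      (inner ℂ (schwartzToL2 μ (ψ t)) (schwartzToL2 μ f)).re s t := by
  rw [hasDerivWithinAt_iff_tendsto_slope]
  refine ((Complex.continuous_re.tendsto _).comp (h.tendsto_inner_slope ht hM f)).congr fun r => ?_
  rw [Function.comp_apply, slope_def_module, RCLike.real_smul_eq_coe_smul (K := ℂ), inner_smul_left,
    inner_sub_left, RCLike.conj_ofReal, slope_def_module, smul_eq_mul, ← Complex.sub_re]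
  exact Complex.re_ofReal_mul _ _

variable [SFinite μ] [CompleteSpace F]

theorem norm_schwartzToL2_sub_le (h : HasPointwiseDerivOn φ ψ (Icc a b)) (hab : a ≤ b)
    (hM : ∀ t ∈ Ioo a b, ‖schwartzToL2 μ (ψ t)‖ ≤ M) :
    ‖schwartzToL2 μ (φ b) - schwartzToL2 μ (φ a)‖ ≤ M * (b - a) := by
  rcases hab.eq_or_lt with rfl | hlt
  · simp
  have hM0 : 0 ≤ M := (norm_nonneg _).trans (hM ((a + b) / 2) ⟨by linarith, by linarith⟩)
  have key := eLpNorm_sub_le_of_hasDerivWithinAt (μ := μ) (p := 2) (M := ENNReal.ofReal M) hab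
    one_le_two ENNReal.ofNat_ne_top (fun t _ => (φ t).continuous.stronglyMeasurable) h
    fun t ht => by
      rw [← enorm_schwartzToL2, ← ofReal_norm]
      exact ENNReal.ofReal_le_ofReal (hM t ht)
  rw [show ⇑(φ b) - ⇑(φ a) = ⇑(φ b - φ a) from rfl, ← enorm_schwartzToL2,
    ← ENNReal.ofReal_mul hM0, ← ofReal_norm, map_sub] at key
  exact (ENNReal.ofReal_le_ofReal_iff (mul_nonneg hM0 (sub_nonneg.2 hab))).1 key

theorem norm_schwartzToL2_sub_le_mul_abs (h : HasPointwiseDerivOn φ ψ (Icc a b))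
    (hM : ∀ t ∈ Ioo a b, ‖schwartzToL2 μ (ψ t)‖ ≤ M) {r t : ℝ} (hr : r ∈ Icc a b)
    (ht : t ∈ Icc a b) :
    ‖schwartzToL2 μ (φ r) - schwartzToL2 μ (φ t)‖ ≤ M * |r - t| := by
  wlog htr : t ≤ r generalizing r t
  · rw [norm_sub_rev, abs_sub_comm]
    exact this ht hr (le_of_not_ge htr)
  rw [abs_of_nonneg (sub_nonneg.2 htr)]
  exact (h.mono (Icc_subset_Icc ht.1 hr.2)).norm_schwartzToL2_sub_le htr
    fun u hu => hM u (Ioo_subset_Ioo ht.1 hr.2 hu)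

end HasPointwiseDerivOn

end SchwartzCurves

section SkewEvolution

open Set Filter Topology
open scoped SchwartzMap

variable {E F : Type*} [NormedAddCommGroup E] [NormedSpace ℝ E] [FiniteDimensional ℝ E]
  [MeasurableSpace E] [BorelSpace E] [NormedAddCommGroup F] [InnerProductSpace ℂ F]
  {μ : Measure E} [μ.HasTemperateGrowth]
  {A : Module.End ℂ 𝓢(E, F)} {φ G : ℝ → 𝓢(E, F)} {a b c M : ℝ}

theorem isClosed_setOf_norm_le_of_skew_evolution (hA : IsFormalAdjoint μ A (-A)) {I : Set ℝ}
    (hI : IsClosed I) (h : HasPointwiseDerivOn φ (fun t => A (φ t)) I) (c : ℝ) :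
    IsClosed {t ∈ I | max ‖schwartzToL2 μ (φ t)‖ ‖schwartzToL2 μ (A (φ t))‖ ≤ c} := by
  set T := {t ∈ I | max ‖schwartzToL2 μ (φ t)‖ ‖schwartzToL2 μ (A (φ t))‖ ≤ c}
  refine isClosed_of_closure_subset fun t ht => ?_
  have htI : t ∈ I := closure_minimal (fun _ hs => hs.1) hI ht
  have : (𝓝[T] t).NeBot := mem_closure_iff_nhdsWithin_neBot.1 ht
  have hφ : ∀ᶠ s in 𝓝[T] t, ‖schwartzToL2 μ (φ s)‖ ≤ c :=
    eventually_mem_nhdsWithin.mono fun s hs => (le_max_left _ _).trans hs.2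
  have hAφ : ∀ᶠ s in 𝓝[T] t, ‖schwartzToL2 μ (A (φ s))‖ ≤ c :=
    eventually_mem_nhdsWithin.mono fun s hs => (le_max_right _ _).trans hs.2
  have hlim : ∀ x, Tendsto (fun s => φ s x) (𝓝[T] t) (𝓝 (φ t x)) := fun x =>
    ((h t htI x).continuousWithinAt.mono fun _ hs => hs.1).tendsto
  exact ⟨htI, max_le
    (norm_le_of_tendsto_inner (𝕜 := ℂ) hφ (tendsto_inner_schwartzToL2 hφ hlim (φ t)))
    (hA.norm_schwartzToL2_apply_le_of_tendsto hφ hAφ hlim)⟩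

variable [CompleteSpace F] [SFinite μ]

theorem abs_norm_sub_norm_le_of_skew_evolution (hA : IsFormalAdjoint μ A (-A)) (hab : a ≤ b)
    (h : HasPointwiseDerivOn φ (fun t => A (φ t) + G t) (Icc a b))
    (hM : ∀ t ∈ Ioo a b, ‖schwartzToL2 μ (A (φ t) + G t)‖ ≤ M)
    (hG : ∀ t ∈ Icc a b, ‖schwartzToL2 μ (G t)‖ ≤ c) :
    |‖schwartzToL2 μ (φ b)‖ - ‖schwartzToL2 μ (φ a)‖| ≤ c * (b - a) := by
  have hLip : ∀ r ∈ Icc a b, ∀ t ∈ Icc a b,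
      ‖schwartzToL2 μ (φ r) - schwartzToL2 μ (φ t)‖ ≤ M * |r - t| :=
    fun r hr t ht => h.norm_schwartzToL2_sub_le_mul_abs hM hr ht
  refine abs_norm_sub_norm_le_of_re_inner_deriv_le (𝕜 := ℂ) hab hLip
    (fun t ht => h.hasDerivWithinAt_re_inner ht
      (eventually_mem_nhdsWithin.mono fun r hr => hLip r hr t ht) (φ t))
    ((norm_nonneg _).trans (hG a (left_mem_Icc.2 hab))) fun t ht => ?_
  rw [map_add, inner_add_left, Complex.add_re, hA.re_inner_self_eq_zero, zero_add]
  exact (Complex.abs_re_le_norm _).trans <| (norm_inner_le_norm _ _).trans <|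
    mul_le_mul_of_nonneg_right (hG t ht) (norm_nonneg _)

theorem norm_eq_of_skew_evolution (hA : IsFormalAdjoint μ A (-A)) (hab : a ≤ b)
    (h : HasPointwiseDerivOn φ (fun t => A (φ t)) (Icc a b))
    (hM : ∀ t ∈ Ioo a b, ‖schwartzToL2 μ (A (φ t))‖ ≤ M) :
    ‖schwartzToL2 μ (φ a)‖ = ‖schwartzToL2 μ (φ b)‖ := by
  have key := abs_norm_sub_norm_le_of_skew_evolution (G := 0) (c := 0) hA hab
    (by simpa using h) (by simpa using hM) (by simp)
  rw [zero_mul, abs_nonpos_iff, sub_eq_zero] at key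
  exact key.symm

theorem norm_sub_eq_of_skew_evolution (hA : IsFormalAdjoint μ A (-A)) {τ : ℝ} (hτ : 0 ≤ τ)
    (h : HasPointwiseDerivOn φ (fun t => A (φ t)) (Icc a b))
    (hM : ∀ t ∈ Ioo a b, ‖schwartzToL2 μ (A (φ t))‖ ≤ M) {r s : ℝ} (hr : r ∈ Icc a (b - τ))
    (hs : s ∈ Icc a (b - τ)) :
    ‖schwartzToL2 μ (φ (r + τ)) - schwartzToL2 μ (φ r)‖ =
      ‖schwartzToL2 μ (φ (s + τ)) - schwartzToL2 μ (φ s)‖ := by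
  wlog hrs : r ≤ s generalizing r s
  · exact (this hs hr (le_of_not_ge hrs)).symm
  have hmem : ∀ t ∈ Ioo r s, t ∈ Ioo a b ∧ t + τ ∈ Ioo a b := fun t ht =>
    ⟨⟨hr.1.trans_lt ht.1, by linarith [ht.2, hs.2]⟩,
      ⟨by linarith [ht.1, hr.1], by linarith [ht.2, hs.2]⟩⟩
  have hshift := h.comp_add_const (s' := Icc r s) (τ := τ) fun t ht =>
    ⟨by linarith [ht.1, hr.1], by linarith [ht.2, hs.2]⟩
  have hdiff : HasPointwiseDerivOn (fun t => φ (t + τ) - φ t)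
      (fun t => A (φ (t + τ) - φ t)) (Icc r s) := by
    simpa only [map_sub] using hshift.sub (h.mono (Icc_subset_Icc hr.1 (by linarith [hs.2])))
  have key := norm_eq_of_skew_evolution (M := M + M) hA hrs hdiff fun t ht => by
    rw [map_sub, map_sub]
    exact norm_sub_le_of_le (hM _ (hmem t ht).2) (hM _ (hmem t ht).1)
  simpa only [map_sub] using key

theorem norm_sub_le_of_skew_evolution (hA : IsFormalAdjoint μ A (-A))
    (h : HasPointwiseDerivOn φ (fun t => A (φ t)) (Icc a b))
    (hM : ∀ t ∈ Ioo a b, ‖schwartzToL2 μ (A (φ t))‖ ≤ M) {r s u : ℝ} (hr : a ≤ r) (hrs : r ≤ s)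
    (hs : s ≤ b) (hu : u = r ∨ u = s) :
    ‖schwartzToL2 μ (φ s) - schwartzToL2 μ (φ r)‖ ≤ ‖schwartzToL2 μ (A (φ u))‖ * (s - r) := by
  have hsub := (h.mono (Icc_subset_Icc hr hs)).sub_const (φ u)
  have key := abs_norm_sub_norm_le_of_skew_evolution (φ := fun t => φ t - φ u)
    (G := fun _ => A (φ u)) (M := M) (c := ‖schwartzToL2 μ (A (φ u))‖) hA hrs
    (by simpa only [map_sub, sub_add_cancel] using hsub)
    (fun t ht => by
      simpa only [map_sub, sub_add_cancel] using hM t (Ioo_subset_Ioo hr hs ht))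
    fun _ _ => le_rfl
  rcases hu with rfl | rfl
  · simpa using key
  · simpa [norm_sub_rev] using key

/- The increments of `φ` over a time step `τ` have constant norm, which is computed at an end point
of the step equal to `u`; letting `τ → 0` turns this into a comparison of `A φ` at two times. -/
theorem norm_apply_le_of_skew_evolution (hA : IsFormalAdjoint μ A (-A)) (hab : a < b)
    (h : HasPointwiseDerivOn φ (fun t => A (φ t)) (Icc a b))
    (hM : ∀ t ∈ Ioo a b, ‖schwartzToL2 μ (A (φ t))‖ ≤ M) {t u : ℝ} (ht : t ∈ Icc a b)
    (hu : u ∈ Icc a b) :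
    ‖schwartzToL2 μ (A (φ t))‖ ≤ ‖schwartzToL2 μ (A (φ u))‖ := by
  have hstep : ∀ r s, a ≤ r → r ≤ s → s ≤ b → s - r ≤ (b - a) / 2 →
      ‖schwartzToL2 μ (φ s) - schwartzToL2 μ (φ r)‖ ≤ ‖schwartzToL2 μ (A (φ u))‖ * (s - r) := by
    intro r s hr hrs hs hsmall
    obtain ⟨v, hv, hvu⟩ : ∃ v ∈ Icc a (b - (s - r)), u = v ∨ u = v + (s - r) := by
      rcases le_total u ((a + b) / 2) with hmid | hmid
      · exact ⟨u, ⟨hu.1, by linarith⟩, .inl rfl⟩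
      · exact ⟨u - (s - r), ⟨by linarith, by linarith [hu.2]⟩, .inr (by ring)⟩
    have hshift := norm_sub_eq_of_skew_evolution hA (sub_nonneg.2 hrs) h hM
      (show r ∈ Icc a (b - (s - r)) from ⟨hr, by linarith⟩) hv
    rw [add_sub_cancel] at hshift
    simpa [hshift] using norm_sub_le_of_skew_evolution hA h hM hv.1
      (le_add_of_nonneg_right (sub_nonneg.2 hrs)) (by linarith [hv.2]) hvu
  refine h.norm_schwartzToL2_deriv_le ht (uniqueDiffOn_Icc hab t ht).accPt ?_
  filter_upwards [self_mem_nhdsWithin, nhdsWithin_le_nhds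
    (Metric.closedBall_mem_nhds t (show 0 < (b - a) / 2 by linarith))] with r hr hrt
  rw [Metric.mem_closedBall, Real.dist_eq] at hrt
  rcases le_total r t with hle | hle
  · rw [abs_sub_comm, abs_of_nonneg (sub_nonneg.2 hle)] at hrt ⊢
    rw [norm_sub_rev]
    exact hstep r t hr.1 hle ht.2 hrt
  · rw [abs_of_nonneg (sub_nonneg.2 hle)] at hrt ⊢
    exact hstep t r ht.1 hle hr.2 hrt

theorem exists_forall_norm_apply_le_of_skew_evolution (hA : IsFormalAdjoint μ A (-A))
    (h : HasPointwiseDerivOn φ (fun t => A (φ t)) (Ici a)) :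
    ∃ C, ∀ t ∈ Ici a, ‖schwartzToL2 μ (A (φ t))‖ ≤ C := by
  refine ⟨max ‖schwartzToL2 μ (φ a)‖ ‖schwartzToL2 μ (A (φ a))‖, fun t ht =>
    (le_max_right _ _).trans (eq_of_isClosed_sublevel isClosed_Ici ordConnected_Ici
      (isClosed_setOf_norm_le_of_skew_evolution hA isClosed_Ici h) ?_ self_mem_Ici ht ht).ge⟩
  rintro r s hrs hsub ⟨M, hM⟩
  rcases hrs.eq_or_lt with rfl | hlt
  · rfl
  have hM' : ∀ u ∈ Ioo r s, ‖schwartzToL2 μ (A (φ u))‖ ≤ M := fun u hu =>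
    (le_max_right _ _).trans (hM (mem_image_of_mem _ hu))
  have hr := left_mem_Icc.2 hrs
  have hs := right_mem_Icc.2 hrs
  rw [norm_eq_of_skew_evolution hA hrs (h.mono hsub) hM',
    (norm_apply_le_of_skew_evolution hA hlt (h.mono hsub) hM' hr hs).antisymm
      (norm_apply_le_of_skew_evolution hA hlt (h.mono hsub) hM' hs hr)]

theorem norm_sub_le_of_skew_evolution_of_residual {S : ℝ → 𝓢(E, F)}
    (hA : IsFormalAdjoint μ A (-A)) (hφ : HasPointwiseDerivOn φ (fun t => A (φ t)) (Ici a))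
    (hab : a ≤ b) (hS : HasPointwiseDerivOn S (fun t => A (S t) + G t) (Icc a b))
    (hM : ∀ t ∈ Ioo a b, ‖schwartzToL2 μ (A (S t) + G t)‖ ≤ M)
    (hG : ∀ t ∈ Icc a b, ‖schwartzToL2 μ (G t)‖ ≤ c) (hinit : φ a = S a) :
    ‖schwartzToL2 μ (φ b - S b)‖ ≤ c * (b - a) := by
  obtain ⟨C, hC⟩ := exists_forall_norm_apply_le_of_skew_evolution hA hφ
  have hderiv : ∀ t, A (φ t - S t) + -G t = A (φ t) - (A (S t) + G t) := fun t => by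
    rw [map_sub]
    abel
  have key := abs_norm_sub_norm_le_of_skew_evolution (φ := fun t => φ t - S t)
    (G := fun t => -G t) (M := C + M) (c := c) hA hab
    (by simpa only [hderiv] using (hφ.mono Icc_subset_Ici_self).sub hS)
    (fun t ht => by
      rw [hderiv, map_sub]
      exact norm_sub_le_of_le (hC t ht.1.le) (hM t ht))
    fun t ht => by simpa only [map_neg, norm_neg] using hG t ht
  simpa [hinit] using key

end SkewEvolution

section FormalAdjoint

open scoped SchwartzMap

variable {E F : Type*} [NormedAddCommGroup E] [NormedSpace ℝ E] [FiniteDimensional ℝ E]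
  [MeasurableSpace E] [BorelSpace E] [NormedAddCommGroup F] [InnerProductSpace ℂ F]
  {μ : Measure E} [μ.HasTemperateGrowth] {A A' B B' : Module.End ℂ 𝓢(E, F)}

namespace IsFormalAdjoint

theorem add (hA : IsFormalAdjoint μ A B) (hA' : IsFormalAdjoint μ A' B') :
    IsFormalAdjoint μ (A + A') (B + B') := fun f g => by
  simp only [LinearMap.add_apply, map_add, inner_add_left, inner_add_right, hA f g, hA' f g]

theorem neg (hA : IsFormalAdjoint μ A B) : IsFormalAdjoint μ (-A) (-B) := fun f g => by
  simp only [LinearMap.neg_apply, map_neg, inner_neg_left, inner_neg_right, hA f g]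

theorem ofReal_smul (hA : IsFormalAdjoint μ A B) (c : ℝ) :
    IsFormalAdjoint μ ((c : ℂ) • A) ((c : ℂ) • B) := fun f g => by
  simp only [LinearMap.smul_apply, map_smul, inner_smul_left, inner_smul_right, hA f g,
    Complex.conj_ofReal]

theorem sum {ι : Type*} {s : Finset ι} {A B : ι → Module.End ℂ 𝓢(E, F)}
    (h : ∀ i ∈ s, IsFormalAdjoint μ (A i) (B i)) :
    IsFormalAdjoint μ (∑ i ∈ s, A i) (∑ i ∈ s, B i) := fun f g => by
  simp only [LinearMap.sum_apply, map_sum, sum_inner, inner_sum]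
  exact Finset.sum_congr rfl fun i hi => h i hi f g

theorem mul (hA : IsFormalAdjoint μ A B) (hA' : IsFormalAdjoint μ A' B') :
    IsFormalAdjoint μ (A * A') (B' * B) := fun f g => by
  rw [Module.End.mul_apply, hA, hA', Module.End.mul_apply]

theorem pow (hA : IsFormalAdjoint μ A B) (n : ℕ) : IsFormalAdjoint μ (A ^ n) (B ^ n) := by
  induction n with
  | zero => exact fun f g => rfl
  | succ n ih =>
    rw [pow_succ, pow_succ']
    exact ih.mul hA

theorem pow_mul_odd_pow_of_commute (hA : IsFormalAdjoint μ A A) (hB : IsFormalAdjoint μ B (-B))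
    (hcomm : Commute A B) (k : ℕ) {m : ℕ} (hm : Odd m) :
    IsFormalAdjoint μ (A ^ k * B ^ m) (-(A ^ k * B ^ m)) := by
  have h := (hA.pow k).mul (hB.pow m)
  rwa [hm.neg_pow, neg_mul, ((hcomm.pow_pow k m).symm).eq] at h

end IsFormalAdjoint

end FormalAdjoint

section CoordinateOperators

open scoped SchwartzMap LineDeriv

variable {E : Type*} [NormedAddCommGroup E] [NormedSpace ℝ E]

/-- Multiplication of Schwartz functions by the real linear functional `ℓ`. -/
noncomputable def coordMul (ℓ : E →L[ℝ] ℝ) : Module.End ℂ 𝓢(E, ℂ) :=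
  (SchwartzMap.smulLeftCLM ℂ (fun x => (ℓ x : ℂ))).toLinearMap

/-- The derivative of Schwartz functions in the direction `v`. -/
noncomputable def dirDeriv (v : E) : Module.End ℂ 𝓢(E, ℂ) :=
  (LineDeriv.lineDerivOpCLM ℂ 𝓢(E, ℂ) v).toLinearMap

theorem coordMul_apply (ℓ : E →L[ℝ] ℝ) (f : 𝓢(E, ℂ)) (x : E) : coordMul ℓ f x = ℓ x * f x :=
  SchwartzMap.smulLeftCLM_apply_apply (Complex.ofRealCLM.comp ℓ).hasTemperateGrowth f x

theorem coordMul_pow_apply (ℓ : E →L[ℝ] ℝ) (n : ℕ) (f : 𝓢(E, ℂ)) (x : E) :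
    (coordMul ℓ ^ n) f x = (ℓ x : ℂ) ^ n * f x := by
  induction n with
  | zero => simp
  | succ n ih => rw [pow_succ', Module.End.mul_apply, coordMul_apply, ih, pow_succ', mul_assoc]

theorem dirDeriv_apply (v : E) (f : 𝓢(E, ℂ)) (x : E) : dirDeriv v f x = fderiv ℝ f x v :=
  SchwartzMap.lineDerivOp_apply_eq_fderiv v f x

theorem hasDerivAt_comp_of_hasDerivAt (f : 𝓢(E, ℂ)) {γ : ℝ → E} {v : E} {t : ℝ}
    (hγ : HasDerivAt γ v t) : HasDerivAt (fun s => f (γ s)) (dirDeriv v f (γ t)) t := by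
  rw [dirDeriv_apply]
  exact (f.hasFDerivAt (γ t)).comp_hasDerivAt t hγ

theorem hasDerivAt_add_smul (f : 𝓢(E, ℂ)) (x v : E) (s : ℝ) :
    HasDerivAt (fun s : ℝ => f (x + s • v)) (dirDeriv v f (x + s • v)) s :=
  hasDerivAt_comp_of_hasDerivAt f
    (by simpa using ((hasDerivAt_id s).smul_const v).const_add x)

theorem iteratedDeriv_add_smul (n : ℕ) (f : 𝓢(E, ℂ)) (x v : E) :
    iteratedDeriv n (fun s : ℝ => f (x + s • v)) = fun s => (dirDeriv v ^ n) f (x + s • v) := by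
  induction n generalizing f with
  | zero => simp
  | succ n ih =>
    rw [iteratedDeriv_succ', funext fun s => (hasDerivAt_add_smul f x v s).deriv, ih, pow_succ]
    rfl

theorem commute_coordMul_dirDeriv {ℓ : E →L[ℝ] ℝ} {v : E} (h : ℓ v = 0) :
    Commute (coordMul ℓ) (dirDeriv v) := by
  ext f x
  have hline : (fun s : ℝ => coordMul ℓ f (x + s • v)) = fun s => (ℓ x : ℂ) * f (x + s • v) := by
    ext s
    simp [coordMul_apply, h]
  have hderiv := hasDerivAt_add_smul (coordMul ℓ f) x v 0
  rw [hline] at hderiv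
  simpa [coordMul_apply] using ((hasDerivAt_add_smul f x v 0).const_mul (ℓ x : ℂ)).unique hderiv

variable [FiniteDimensional ℝ E] [MeasurableSpace E] [BorelSpace E] {μ : Measure E}

theorem isFormalAdjoint_coordMul [μ.HasTemperateGrowth] (ℓ : E →L[ℝ] ℝ) :
    IsFormalAdjoint μ (coordMul ℓ) (coordMul ℓ) := fun f g => by
  simp only [inner_schwartzToL2, coordMul_apply, ← smul_eq_mul (a := ((ℓ _ : ℝ) : ℂ)),
    inner_smul_left, inner_smul_right, Complex.conj_ofReal]

theorem isFormalAdjoint_dirDeriv [μ.IsAddHaarMeasure] (v : E) :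
    IsFormalAdjoint μ (dirDeriv v) (-dirDeriv v) := fun f g => by
  rw [LinearMap.neg_apply, map_neg, inner_neg_right, inner_schwartzToL2, inner_schwartzToL2]
  have h := SchwartzMap.integral_bilinear_lineDerivOp_right_eq_neg_left (μ := μ) f g
    ((ContinuousLinearMap.mul ℝ ℂ).comp (Complex.conjCLE : ℂ →L[ℝ] ℂ)) v
  simp only [RCLike.inner_apply']
  exact (neg_eq_iff_eq_neg.2 h).symm

theorem isFormalAdjoint_coordMul_pow_mul_dirDeriv_pow [μ.IsAddHaarMeasure] {ℓ : E →L[ℝ] ℝ} {v : E}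
    (h : ℓ v = 0) (k : ℕ) {m : ℕ} (hm : Odd m) :
    IsFormalAdjoint μ (coordMul ℓ ^ k * dirDeriv v ^ m) (-(coordMul ℓ ^ k * dirDeriv v ^ m)) :=
  (isFormalAdjoint_coordMul ℓ).pow_mul_odd_pow_of_commute (isFormalAdjoint_dirDeriv v)
    (commute_coordMul_dirDeriv h) k hm

end CoordinateOperators

section WignerOperators

open scoped SchwartzMap

local notation "ξ" => ContinuousLinearMap.fst ℝ ℝ ℝ
local notation "η" => ContinuousLinearMap.snd ℝ ℝ ℝ
local notation "∂ξ" => dirDeriv ((1, 0) : ℝ × ℝ)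
local notation "∂η" => dirDeriv ((0, 1) : ℝ × ℝ)

/-- The operator `Lh` acting on Schwartz functions. -/
noncomputable def harmonicOp : Module.End ℂ 𝓢(ℝ × ℝ, ℂ) :=
  coordMul η * ∂ξ - coordMul ξ * ∂η

/-- The coefficient of `ξ ^ (ν + 1 - 2j) ∂_η ^ (2j + 1)` in `Bop V ν`; it is real because
`(i/2) ^ (2j) = (-1/4) ^ j`. -/
noncomputable def correctionCoeff (V : ℝ → ℝ) (ν j : ℕ) : ℝ :=
  -iteratedDeriv (ν + 2) V 0 *
    ((-1 / 4) ^ j * (1 / ((2 * j + 1).factorial * (ν + 1 - 2 * j).factorial : ℕ)))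

/-- The operator `Bop V ν` acting on Schwartz functions. -/
noncomputable def correctionOp (V : ℝ → ℝ) (ν : ℕ) : Module.End ℂ 𝓢(ℝ × ℝ, ℂ) :=
  ∑ j ∈ Finset.range ((ν - 1) / 2 + 2),
    (correctionCoeff V ν j : ℂ) • (coordMul ξ ^ (ν + 1 - 2 * j) * ∂η ^ (2 * j + 1))

/-- The generator `-(L_h + ∑ ε^{ν/2} B_ν)` of the dilated Wigner equation with corrections up to
order `n`, in terms of the expansion parameter `δ = √ε`. -/
noncomputable def wignerGenerator (V : ℝ → ℝ) (n : ℕ) (δ : ℝ) : Module.End ℂ 𝓢(ℝ × ℝ, ℂ) :=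
  -(harmonicOp + ∑ ν ∈ Finset.Icc 1 n, ((δ ^ ν : ℝ) : ℂ) • correctionOp V ν)

theorem harmonicOp_apply (f : 𝓢(ℝ × ℝ, ℂ)) (p : ℝ × ℝ) :
    harmonicOp f p = p.2 * ∂ξ f p - p.1 * ∂η f p := by
  simp only [harmonicOp, LinearMap.sub_apply, Module.End.mul_apply, _root_.sub_apply,
    coordMul_apply, ContinuousLinearMap.coe_fst', ContinuousLinearMap.coe_snd']

theorem deriv_fst_eq_dirDeriv (f : 𝓢(ℝ × ℝ, ℂ)) (p : ℝ × ℝ) :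
    deriv (fun x => f (x, p.2)) p.1 = ∂ξ f p := by
  simpa using (hasDerivAt_add_smul f (0, p.2) (1, 0) p.1).deriv

theorem iteratedDeriv_snd_eq_dirDeriv_pow (n : ℕ) (f : 𝓢(ℝ × ℝ, ℂ)) (p : ℝ × ℝ) :
    iteratedDeriv n (fun y => f (p.1, y)) p.2 = (∂η ^ n) f p := by
  simpa using congrFun (iteratedDeriv_add_smul n f (p.1, 0) (0, 1)) p.2

theorem Lh_eq_harmonicOp (f : 𝓢(ℝ × ℝ, ℂ)) : Lh f = harmonicOp f := by
  ext p
  rw [harmonicOp_apply, Lh, deriv_fst_eq_dirDeriv, ← iteratedDeriv_one,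
    iteratedDeriv_snd_eq_dirDeriv_pow, pow_one]

theorem Bop_eq_correctionOp (V : ℝ → ℝ) (ν : ℕ) (f : 𝓢(ℝ × ℝ, ℂ)) :
    Bop V ν f = correctionOp V ν f := by
  ext p
  rw [Bop, correctionOp, LinearMap.sum_apply, _root_.sum_apply, Finset.mul_sum]
  refine Finset.sum_congr rfl fun j _ => ?_
  have hI : (Complex.I / 2) ^ (2 * j) = (-1 / 4) ^ j := by
    rw [pow_mul, div_pow, Complex.I_sq]
    norm_num
  rw [iteratedDeriv_snd_eq_dirDeriv_pow, LinearMap.smul_apply, _root_.smul_apply,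
    Module.End.mul_apply, coordMul_pow_apply, correctionCoeff, smul_eq_mul, hI]
  push_cast [ContinuousLinearMap.coe_fst']
  ring

theorem wignerGenerator_apply (V : ℝ → ℝ) (n : ℕ) (δ : ℝ) (f : 𝓢(ℝ × ℝ, ℂ)) :
    wignerGenerator V n δ f = -(harmonicOp f +
      ∑ ν ∈ Finset.Icc 1 n, ((δ ^ ν : ℝ) : ℂ) • correctionOp V ν f) := by
  simp only [wignerGenerator, LinearMap.neg_apply, LinearMap.add_apply, LinearMap.sum_apply,
    LinearMap.smul_apply]

theorem wignerGenerator_apply_apply (V : ℝ → ℝ) (n : ℕ) (δ : ℝ) (f : 𝓢(ℝ × ℝ, ℂ)) (p : ℝ × ℝ) :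
    wignerGenerator V n δ f p = -(Lh f p +
      ∑ ν ∈ Finset.Icc 1 n, ((δ ^ ν : ℝ) : ℂ) * Bop V ν f p) := by
  simp only [wignerGenerator_apply, _root_.neg_apply, _root_.add_apply, _root_.sum_apply,
    _root_.smul_apply, smul_eq_mul, Lh_eq_harmonicOp, Bop_eq_correctionOp]

theorem isFormalAdjoint_harmonicOp : IsFormalAdjoint volume harmonicOp (-harmonicOp) := by
  have hrot : harmonicOp = coordMul η ^ 1 * ∂ξ ^ 1 + -(coordMul ξ ^ 1 * ∂η ^ 1) := by
    simp only [harmonicOp, pow_one, sub_eq_add_neg]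
  rw [hrot, neg_add]
  exact (isFormalAdjoint_coordMul_pow_mul_dirDeriv_pow rfl 1 odd_one).add
    (isFormalAdjoint_coordMul_pow_mul_dirDeriv_pow rfl 1 odd_one).neg

theorem isFormalAdjoint_correctionOp (V : ℝ → ℝ) (ν : ℕ) :
    IsFormalAdjoint volume (correctionOp V ν) (-correctionOp V ν) := by
  simp only [correctionOp, ← Finset.sum_neg_distrib, ← smul_neg]
  exact .sum fun j _ => (isFormalAdjoint_coordMul_pow_mul_dirDeriv_pow rfl _
    (odd_two_mul_add_one j)).ofReal_smul _

theorem isFormalAdjoint_wignerGenerator (V : ℝ → ℝ) (n : ℕ) (δ : ℝ) :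
    IsFormalAdjoint volume (wignerGenerator V n δ) (-wignerGenerator V n δ) := by
  have hsum : IsFormalAdjoint volume
      (∑ ν ∈ Finset.Icc 1 n, ((δ ^ ν : ℝ) : ℂ) • correctionOp V ν)
      (-∑ ν ∈ Finset.Icc 1 n, ((δ ^ ν : ℝ) : ℂ) • correctionOp V ν) := by
    simp only [← Finset.sum_neg_distrib, ← smul_neg]
    exact .sum fun ν _ => (isFormalAdjoint_correctionOp V ν).ofReal_smul _
  rw [wignerGenerator]
  simpa only [neg_add] using (isFormalAdjoint_harmonicOp.add hsum).neg

end WignerOperators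

section PolynomialGrowth

variable {H : Type*} [NormedAddCommGroup H]

/-- The function `u` of time is bounded by a polynomial in `|t|`. -/
def HasPolyGrowth (u : ℝ → H) : Prop :=
  ∃ (C : ℝ) (m : ℕ), 0 ≤ C ∧ ∀ t, ‖u t‖ ≤ C * (1 + |t|) ^ m

namespace HasPolyGrowth

variable {u v : ℝ → H}

theorem of_norm_le {C : ℝ} (h : ∀ t, ‖u t‖ ≤ C) : HasPolyGrowth u :=
  ⟨C, 0, (norm_nonneg _).trans (h 0), fun t => by simpa using h t⟩

theorem add (hu : HasPolyGrowth u) (hv : HasPolyGrowth v) :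
    HasPolyGrowth (fun t => u t + v t) := by
  obtain ⟨C, m, hC, hu⟩ := hu
  obtain ⟨C', m', hC', hv⟩ := hv
  refine ⟨C + C', max m m', by positivity, fun t => ?_⟩
  have ht : 1 ≤ 1 + |t| := le_add_of_nonneg_right (abs_nonneg t)
  rw [add_mul]
  refine norm_add_le_of_le ((hu t).trans ?_) ((hv t).trans ?_)
  · gcongr
    exact le_max_left _ _
  · gcongr
    exact le_max_right _ _

theorem sum {ι : Type*} {s : Finset ι} {u : ι → ℝ → H} (h : ∀ i ∈ s, HasPolyGrowth (u i)) :
    HasPolyGrowth (fun t => ∑ i ∈ s, u i t) := by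
  simpa only [Finset.sum_fn] using Finset.sum_induction u HasPolyGrowth (fun _ _ => add)
    (of_norm_le (C := 0) fun t => by simp) h

theorem smul {𝕜 : Type*} [NormedField 𝕜] [NormedSpace 𝕜 H] {a : ℝ → 𝕜} (ha : HasPolyGrowth a)
    (hu : HasPolyGrowth u) : HasPolyGrowth (fun t => a t • u t) := by
  obtain ⟨C, m, hC, ha⟩ := ha
  obtain ⟨C', m', hC', hu⟩ := hu
  refine ⟨C * C', m + m', by positivity, fun t => ?_⟩
  rw [norm_smul, pow_add, mul_mul_mul_comm]
  gcongr
  exacts [ha t, hu t]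

theorem norm (hu : HasPolyGrowth u) : HasPolyGrowth (fun t => ‖u t‖) := by
  simpa only [HasPolyGrowth, norm_norm] using hu

theorem integral [NormedSpace ℝ H] (hu : HasPolyGrowth u) :
    HasPolyGrowth (fun t => ∫ s in (0 : ℝ)..t, u s) := by
  obtain ⟨C, m, hC, hu⟩ := hu
  refine ⟨C, m + 1, hC, fun t => ?_⟩
  have hle : ∀ s ∈ Set.uIoc 0 t, ‖u s‖ ≤ C * (1 + |t|) ^ m := fun s hs => by
    have hst : |s| ≤ |t| := by
      simpa using Set.abs_sub_left_of_mem_uIcc (Set.uIoc_subset_uIcc hs)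
    exact (hu s).trans (by gcongr)
  calc ‖∫ s in (0 : ℝ)..t, u s‖ ≤ C * (1 + |t|) ^ m * |t - 0| :=
        intervalIntegral.norm_integral_le_of_norm_le_const hle
    _ ≤ C * (1 + |t|) ^ m * (1 + |t|) := by
        gcongr
        simp
    _ = C * (1 + |t|) ^ (m + 1) := by ring

theorem exists_forall_mem_Icc_norm_le (hu : HasPolyGrowth u) :
    ∃ (C : ℝ) (m : ℕ), 0 ≤ C ∧ ∀ T, ∀ t ∈ Set.Icc 0 T, ‖u t‖ ≤ C * (1 + T) ^ m := by
  obtain ⟨C, m, hC, hu⟩ := hu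
  refine ⟨C, m, hC, fun T t ht => (hu t).trans ?_⟩
  rw [abs_of_nonneg ht.1]
  have := ht.1
  gcongr
  exact ht.2

end HasPolyGrowth

theorem one_add_pow_mul_le_exp {T : ℝ} (hT : 0 ≤ T) (m : ℕ) :
    (1 + T) ^ m * T ≤ (m + 1).factorial * Real.exp 1 * Real.exp T := by
  have h := Real.pow_div_factorial_le_exp (1 + T) (by positivity) (m + 1)
  rw [div_le_iff₀ (by positivity), Real.exp_add] at h
  calc (1 + T) ^ m * T ≤ (1 + T) ^ m * (1 + T) := by
        gcongr
        exact le_add_of_nonneg_left zero_le_one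
    _ = (1 + T) ^ (m + 1) := (pow_succ _ _).symm
    _ ≤ (m + 1).factorial * Real.exp 1 * Real.exp T := by linarith

end PolynomialGrowth

section HarmonicTransport

open scoped SchwartzMap

local notation "ξ" => ContinuousLinearMap.fst ℝ ℝ ℝ
local notation "η" => ContinuousLinearMap.snd ℝ ℝ ℝ
local notation "∂ξ" => dirDeriv ((1, 0) : ℝ × ℝ)
local notation "∂η" => dirDeriv ((0, 1) : ℝ × ℝ)

theorem gh_zero (z : ℝ × ℝ) : gh 0 z = z := by simp [gh]

theorem gh_gh (s t : ℝ) (z : ℝ × ℝ) : gh s (gh t z) = gh (s + t) z := by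
  simp only [gh, Real.cos_add, Real.sin_add, Prod.mk.injEq]
  constructor <;> ring

/-- The harmonic flow as a linear automorphism of phase space. -/
noncomputable def harmonicFlow (t : ℝ) : (ℝ × ℝ) ≃L[ℝ] (ℝ × ℝ) :=
  LinearEquiv.toContinuousLinearEquiv
    { toFun := gh t
      map_add' := fun z w => by
        simp only [gh, Prod.fst_add, Prod.snd_add, Prod.mk_add_mk, Prod.mk.injEq]
        constructor <;> ring
      map_smul' := fun c z => by
        simp only [gh, Prod.smul_fst, Prod.smul_snd, smul_eq_mul, Prod.smul_mk, RingHom.id_apply,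
          Prod.mk.injEq]
        constructor <;> ring
      invFun := gh (-t)
      left_inv := fun z => by rw [gh_gh, neg_add_cancel, gh_zero]
      right_inv := fun z => by rw [gh_gh, add_neg_cancel, gh_zero] }

theorem harmonicFlow_apply (t : ℝ) (z : ℝ × ℝ) : harmonicFlow t z = gh t z := rfl

theorem det_harmonicFlow (t : ℝ) :
    LinearMap.det ((harmonicFlow t : (ℝ × ℝ) →L[ℝ] ℝ × ℝ) : (ℝ × ℝ) →ₗ[ℝ] ℝ × ℝ) = 1 := by
  rw [← LinearMap.det_toMatrix (Module.Basis.finTwoProd ℝ), Matrix.det_fin_two]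
  simp [LinearMap.toMatrix_apply, harmonicFlow_apply, gh, ← sq]

theorem measurePreserving_harmonicFlow (t : ℝ) :
    MeasurePreserving (harmonicFlow t) volume volume := by
  refine ⟨(harmonicFlow t).continuous.measurable, ?_⟩
  have h := Measure.map_linearMap_addHaar_eq_smul_addHaar (volume : Measure (ℝ × ℝ))
    (f := ((harmonicFlow t : (ℝ × ℝ) →L[ℝ] ℝ × ℝ) : (ℝ × ℝ) →ₗ[ℝ] ℝ × ℝ))
    (by rw [det_harmonicFlow]; exact one_ne_zero)
  rw [det_harmonicFlow, inv_one, abs_one, ENNReal.ofReal_one, one_smul] at h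
  exact h

/-- Transport `f ↦ f ∘ g_h^{-t}` of Schwartz functions along the harmonic flow. -/
noncomputable def harmonicTransport (t : ℝ) : Module.End ℂ 𝓢(ℝ × ℝ, ℂ) :=
  (SchwartzMap.compCLMOfContinuousLinearEquiv ℂ (harmonicFlow (-t))).toLinearMap

theorem harmonicTransport_apply (t : ℝ) (f : 𝓢(ℝ × ℝ, ℂ)) (p : ℝ × ℝ) :
    harmonicTransport t f p = f (gh (-t) p) := rfl

theorem harmonicTransport_zero (f : 𝓢(ℝ × ℝ, ℂ)) : harmonicTransport 0 f = f := by
  ext p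
  rw [harmonicTransport_apply, neg_zero, gh_zero]

theorem harmonicTransport_gh_neg_sub (s t : ℝ) (F : 𝓢(ℝ × ℝ, ℂ)) (p : ℝ × ℝ) :
    harmonicTransport s F (gh (-(t - s)) p) = harmonicTransport t F p := by
  rw [harmonicTransport_apply, harmonicTransport_apply, gh_gh]
  congr 2
  ring

theorem norm_schwartzToL2_harmonicTransport (t : ℝ) (f : 𝓢(ℝ × ℝ, ℂ)) :
    ‖schwartzToL2 volume (harmonicTransport t f)‖ = ‖schwartzToL2 volume f‖ := by
  rw [← sq_eq_sq₀ (norm_nonneg _) (norm_nonneg _), norm_sq_schwartzToL2, norm_sq_schwartzToL2]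
  exact (measurePreserving_harmonicFlow (-t)).integral_comp
    (harmonicFlow (-t)).toHomeomorph.measurableEmbedding fun p => ‖f p‖ ^ 2

theorem hasDerivAt_gh_neg (p : ℝ × ℝ) : HasDerivAt (fun s => gh (-s) p) (-p.2, p.1) 0 := by
  have h₁ := ((Real.hasDerivAt_cos 0).const_mul p.1).sub ((Real.hasDerivAt_sin 0).const_mul p.2)
  have h₂ := ((Real.hasDerivAt_cos 0).const_mul p.2).add ((Real.hasDerivAt_sin 0).const_mul p.1)
  refine ((h₁.prodMk h₂).congr_deriv (by simp)).congr_of_eventuallyEq (.of_forall fun s => ?_)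
  simp [gh, sub_eq_add_neg]

theorem dirDeriv_eq_add (v : ℝ × ℝ) :
    dirDeriv v = (v.1 : ℂ) • ∂ξ + (v.2 : ℂ) • ∂η := by
  ext f p
  have hv : v = v.1 • ((1, 0) : ℝ × ℝ) + v.2 • ((0, 1) : ℝ × ℝ) := by simp
  simp only [LinearMap.add_apply, LinearMap.smul_apply, _root_.add_apply, _root_.smul_apply,
    ← Complex.real_smul, smul_eq_mul, dirDeriv_apply]
  rw [← map_smul, ← map_smul, ← map_add, ← hv]

theorem coordMul_eq_add (ℓ : (ℝ × ℝ) →L[ℝ] ℝ) :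
    coordMul ℓ = (ℓ (1, 0) : ℂ) • coordMul ξ + (ℓ (0, 1) : ℂ) • coordMul η := by
  ext f p
  have hp : ℓ p = p.1 * ℓ (1, 0) + p.2 * ℓ (0, 1) := by
    rw [← smul_eq_mul, ← smul_eq_mul, ← map_smul, ← map_smul, ← map_add]
    simp
  simp only [LinearMap.add_apply, LinearMap.smul_apply, _root_.add_apply, _root_.smul_apply,
    smul_eq_mul, coordMul_apply, hp, ContinuousLinearMap.coe_fst', ContinuousLinearMap.coe_snd']
  push_cast
  ring

theorem hasDerivAt_harmonicTransport (f : 𝓢(ℝ × ℝ, ℂ)) (p : ℝ × ℝ) (t : ℝ) :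
    HasDerivAt (fun s => harmonicTransport s f p) (-harmonicOp (harmonicTransport t f) p) t := by
  have h := hasDerivAt_comp_of_hasDerivAt (harmonicTransport t f) (hasDerivAt_gh_neg p)
  rw [neg_zero, gh_zero, ← sub_self t] at h
  simp only [← harmonicTransport_gh_neg_sub t _ f p]
  refine (h.comp_sub_const t t).congr_deriv ?_
  rw [dirDeriv_eq_add, harmonicOp_apply]
  simp only [LinearMap.add_apply, LinearMap.smul_apply, _root_.add_apply, _root_.smul_apply,
    smul_eq_mul]
  push_cast
  ring

theorem dirDeriv_harmonicTransport (v : ℝ × ℝ) (t : ℝ) (f : 𝓢(ℝ × ℝ, ℂ)) :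
    dirDeriv v (harmonicTransport t f) = harmonicTransport t (dirDeriv (gh (-t) v) f) :=
  SchwartzMap.lineDerivOp_compCLMOfContinuousLinearEquiv ℂ v (harmonicFlow (-t)) f

theorem coordMul_harmonicTransport (ℓ : (ℝ × ℝ) →L[ℝ] ℝ) (t : ℝ) (f : 𝓢(ℝ × ℝ, ℂ)) :
    coordMul ℓ (harmonicTransport t f) =
      harmonicTransport t (coordMul (ℓ.comp (harmonicFlow t : (ℝ × ℝ) →L[ℝ] ℝ × ℝ)) f) := by
  ext p
  simp [coordMul_apply, harmonicTransport_apply, harmonicFlow_apply, gh_gh, gh_zero]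

end HarmonicTransport

section TransportCurves

open scoped SchwartzMap

local notation "ξ" => ContinuousLinearMap.fst ℝ ℝ ℝ
local notation "η" => ContinuousLinearMap.snd ℝ ℝ ℝ

/-- The curves `t ↦ ∑ i, h i t • (F i ∘ g_h^{-t})` with finitely many Schwartz profiles `F i` and
continuous coefficients `h i` of polynomial growth. All expansion terms are of this form. -/
noncomputable def transportCurves : Submodule ℂ (ℝ → 𝓢(ℝ × ℝ, ℂ)) :=
  Submodule.span ℂ {Φ | ∃ (h : ℝ → ℂ) (F : 𝓢(ℝ × ℝ, ℂ)),
    Continuous h ∧ HasPolyGrowth h ∧ Φ = fun t => h t • harmonicTransport t F}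

theorem smul_harmonicTransport_mem_transportCurves {h : ℝ → ℂ} (hcont : Continuous h)
    (hgrowth : HasPolyGrowth h) (F : 𝓢(ℝ × ℝ, ℂ)) :
    (fun t => h t • harmonicTransport t F) ∈ transportCurves :=
  Submodule.subset_span ⟨h, F, hcont, hgrowth, rfl⟩

theorem harmonicTransport_mem_transportCurves (F : 𝓢(ℝ × ℝ, ℂ)) :
    (fun t => harmonicTransport t F) ∈ transportCurves := by
  simpa only [one_smul] using smul_harmonicTransport_mem_transportCurves continuous_const
    (.of_norm_le fun _ => norm_one.le) F

@[elab_as_elim]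
theorem transportCurves_induction {P : (ℝ → 𝓢(ℝ × ℝ, ℂ)) → Prop}
    (generator : ∀ (h : ℝ → ℂ) (F : 𝓢(ℝ × ℝ, ℂ)), Continuous h → HasPolyGrowth h →
      P fun t => h t • harmonicTransport t F)
    (add : ∀ Φ ∈ transportCurves, ∀ Ψ ∈ transportCurves, P Φ → P Ψ → P fun t => Φ t + Ψ t)
    {Φ : ℝ → 𝓢(ℝ × ℝ, ℂ)} (hΦ : Φ ∈ transportCurves) : P Φ := by
  suffices h : ∀ c : ℂ, P (c • Φ) by simpa only [one_smul] using h 1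
  induction hΦ using Submodule.span_induction with
  | mem Φ hΦ =>
    obtain ⟨h, F, hcont, hgrowth, rfl⟩ := hΦ
    intro c
    simpa only [Pi.smul_def, smul_smul] using
      generator (fun t => c * h t) F (continuous_const.mul hcont)
        (HasPolyGrowth.smul (.of_norm_le fun _ => le_refl ‖c‖) hgrowth)
  | zero =>
    simpa [← Pi.zero_def] using
      generator (fun _ => 0) 0 continuous_const (.of_norm_le fun _ => norm_zero.le)
  | add Φ Ψ hΦ hΨ ihΦ ihΨ =>
    exact fun c => (smul_add c Φ Ψ).symm ▸ add _ (transportCurves.smul_mem c hΦ) _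
      (transportCurves.smul_mem c hΨ) (ihΦ c) (ihΨ c)
  | smul a Φ _ hΦ => exact fun c => smul_smul c a Φ ▸ hΦ (c * a)

theorem hasPolyGrowth_schwartzToL2_of_mem_transportCurves {Φ : ℝ → 𝓢(ℝ × ℝ, ℂ)}
    (hΦ : Φ ∈ transportCurves) : HasPolyGrowth (fun t => schwartzToL2 volume (Φ t)) := by
  refine transportCurves_induction (fun h F _ hgrowth => ?_) (fun Φ _ Ψ _ hΦ hΨ => ?_) hΦ
  · simp only [map_smul]
    exact hgrowth.smul (.of_norm_le fun t => (norm_schwartzToL2_harmonicTransport t F).le)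
  · simpa only [map_add] using hΦ.add hΨ

theorem continuous_transportCurve_comp_gh {Φ : ℝ → 𝓢(ℝ × ℝ, ℂ)} (hΦ : Φ ∈ transportCurves)
    (t : ℝ) (p : ℝ × ℝ) : Continuous fun s => Φ s (gh (-(t - s)) p) := by
  refine transportCurves_induction (fun h F hcont _ => ?_) (fun Φ _ Ψ _ hΦ hΨ => hΦ.add hΨ) hΦ
  simp only [_root_.smul_apply, harmonicTransport_gh_neg_sub]
  exact hcont.smul continuous_const

theorem continuous_gh_apply (z : ℝ × ℝ) : Continuous fun t => gh t z := by
  unfold gh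
  fun_prop

theorem norm_gh_le (t : ℝ) (z : ℝ × ℝ) : ‖gh t z‖ ≤ 2 * ‖z‖ := by
  have hbound : ∀ a b : ℝ, |a| ≤ 1 → |b| ≤ 1 → |z.1 * a| + |z.2 * b| ≤ 2 * ‖z‖ := by
    intro a b ha hb
    rw [abs_mul, abs_mul, two_mul, ← mul_one ‖z‖]
    gcongr
    exacts [norm_fst_le z, norm_snd_le z]
  have hcos := Real.abs_cos_le_one t
  have hsin := Real.abs_sin_le_one t
  refine norm_prod_le_iff.2 ⟨(abs_add_le _ _).trans (hbound _ _ hcos hsin), ?_⟩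
  refine (abs_sub _ _).trans ?_
  rw [add_comm]
  exact hbound _ _ hsin hcos

theorem smul_coord_gh_smul_harmonicTransport_mem_transportCurves {h : ℝ → ℂ}
    (hcont : Continuous h) (hgrowth : HasPolyGrowth h) {σ : ℝ → ℝ} (hσ : Continuous σ)
    (ℓ : (ℝ × ℝ) →L[ℝ] ℝ) (z : ℝ × ℝ) (F : 𝓢(ℝ × ℝ, ℂ)) :
    (fun t => h t • ((ℓ (gh (σ t) z) : ℝ) : ℂ) • harmonicTransport t F) ∈ transportCurves := by
  have hcoord : Continuous fun t => ((ℓ (gh (σ t) z) : ℝ) : ℂ) :=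
    Complex.continuous_ofReal.comp (ℓ.continuous.comp ((continuous_gh_apply z).comp hσ))
  have hbound : ∀ t, ‖((ℓ (gh (σ t) z) : ℝ) : ℂ)‖ ≤ ‖ℓ‖ * (2 * ‖z‖) := fun t => by
    rw [Complex.norm_real]
    exact ℓ.le_opNorm_of_le (norm_gh_le _ _)
  simp only [smul_smul]
  exact smul_harmonicTransport_mem_transportCurves (hcont.mul hcoord)
    (hgrowth.smul (.of_norm_le hbound)) F

/-- The operators which, applied at every time, map `transportCurves` to itself. -/
noncomputable def transportCurvePreservers : Subalgebra ℂ (Module.End ℂ 𝓢(ℝ × ℝ, ℂ)) where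
  carrier := {A | ∀ Φ ∈ transportCurves, (fun t => A (Φ t)) ∈ transportCurves}
  mul_mem' hA hB Φ hΦ := hA _ (hB Φ hΦ)
  add_mem' hA hB Φ hΦ := transportCurves.add_mem (hA Φ hΦ) (hB Φ hΦ)
  algebraMap_mem' c _ hΦ := transportCurves.smul_mem c hΦ

theorem mem_transportCurvePreservers_of_generator {A : Module.End ℂ 𝓢(ℝ × ℝ, ℂ)}
    (hA : ∀ (h : ℝ → ℂ) (F : 𝓢(ℝ × ℝ, ℂ)), Continuous h → HasPolyGrowth h →
      (fun t => h t • A (harmonicTransport t F)) ∈ transportCurves) :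
    A ∈ transportCurvePreservers := fun Φ hΦ => by
  refine transportCurves_induction (fun h F hcont hgrowth => ?_) (fun Φ _ Ψ _ hΦ hΨ => ?_) hΦ
  · simpa only [map_smul] using hA h F hcont hgrowth
  · simp only [map_add]
    exact transportCurves.add_mem hΦ hΨ

theorem dirDeriv_mem_transportCurvePreservers (v : ℝ × ℝ) :
    dirDeriv v ∈ transportCurvePreservers := by
  refine mem_transportCurvePreservers_of_generator fun h F hcont hgrowth => ?_
  simp only [dirDeriv_harmonicTransport, dirDeriv_eq_add (gh _ v), LinearMap.add_apply,
    LinearMap.smul_apply, map_add, map_smul, smul_add]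
  exact transportCurves.add_mem
    (smul_coord_gh_smul_harmonicTransport_mem_transportCurves hcont hgrowth continuous_neg ξ v _)
    (smul_coord_gh_smul_harmonicTransport_mem_transportCurves hcont hgrowth continuous_neg η v _)

theorem coordMul_mem_transportCurvePreservers (ℓ : (ℝ × ℝ) →L[ℝ] ℝ) :
    coordMul ℓ ∈ transportCurvePreservers := by
  refine mem_transportCurvePreservers_of_generator fun h F hcont hgrowth => ?_
  simp only [coordMul_harmonicTransport, coordMul_eq_add (ℓ.comp _), LinearMap.add_apply,
    LinearMap.smul_apply, map_add, map_smul, smul_add]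
  exact transportCurves.add_mem
    (smul_coord_gh_smul_harmonicTransport_mem_transportCurves hcont hgrowth continuous_id ℓ _ _)
    (smul_coord_gh_smul_harmonicTransport_mem_transportCurves hcont hgrowth continuous_id ℓ _ _)

theorem harmonicOp_mem_transportCurvePreservers : harmonicOp ∈ transportCurvePreservers :=
  sub_mem
    (mul_mem (coordMul_mem_transportCurvePreservers η) (dirDeriv_mem_transportCurvePreservers _))
    (mul_mem (coordMul_mem_transportCurvePreservers ξ) (dirDeriv_mem_transportCurvePreservers _))

theorem correctionOp_mem_transportCurvePreservers (V : ℝ → ℝ) (ν : ℕ) :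
    correctionOp V ν ∈ transportCurvePreservers :=
  sum_mem fun _ _ => transportCurvePreservers.smul_mem (mul_mem
    (pow_mem (coordMul_mem_transportCurvePreservers ξ) _)
    (pow_mem (dirDeriv_mem_transportCurvePreservers _) _)) _

theorem wignerGenerator_mem_transportCurvePreservers (V : ℝ → ℝ) (n : ℕ) (δ : ℝ) :
    wignerGenerator V n δ ∈ transportCurvePreservers :=
  neg_mem (add_mem harmonicOp_mem_transportCurvePreservers (sum_mem fun ν _ =>
    transportCurvePreservers.smul_mem (correctionOp_mem_transportCurvePreservers V ν) _))

/-- `Ψ` is the solution `Ψ t = ∫₀ᵗ Φ s ∘ g_h^{-(t-s)} ds` of `∂ₜ Ψ + L_h Ψ = Φ`, `Ψ 0 = 0`. -/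
structure IsDuhamelSolution (Φ Ψ : ℝ → 𝓢(ℝ × ℝ, ℂ)) : Prop where
  eq_integral : ∀ t p, Ψ t p = ∫ s in (0 : ℝ)..t, Φ s (gh (-(t - s)) p)
  hasPointwiseDerivOn : HasPointwiseDerivOn Ψ (fun t => Φ t - harmonicOp (Ψ t)) Set.univ

theorem isDuhamelSolution_smul_harmonicTransport {h : ℝ → ℂ} (hcont : Continuous h)
    (F : 𝓢(ℝ × ℝ, ℂ)) :
    IsDuhamelSolution (fun t => h t • harmonicTransport t F)
      (fun t => (∫ s in (0 : ℝ)..t, h s) • harmonicTransport t F) where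
  eq_integral t p := by
    simp only [_root_.smul_apply, harmonicTransport_gh_neg_sub, smul_eq_mul,
      intervalIntegral.integral_mul_const]
  hasPointwiseDerivOn t _ p := by
    have hprimitive : HasDerivAt (fun t => ∫ s in (0 : ℝ)..t, h s) (h t) t :=
      (hcont.integral_hasStrictDerivAt 0 t).hasDerivAt
    refine ((hprimitive.smul (hasDerivAt_harmonicTransport F p t)).congr_deriv ?_).hasDerivWithinAt
    simp only [map_smul, _root_.sub_apply, _root_.smul_apply, smul_eq_mul]
    ring

theorem IsDuhamelSolution.add {Φ Φ' Ψ Ψ' : ℝ → 𝓢(ℝ × ℝ, ℂ)} (h : IsDuhamelSolution Φ Ψ)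
    (h' : IsDuhamelSolution Φ' Ψ') (hΦ : Φ ∈ transportCurves) (hΦ' : Φ' ∈ transportCurves) :
    IsDuhamelSolution (fun t => Φ t + Φ' t) (fun t => Ψ t + Ψ' t) where
  eq_integral t p := by
    simp only [_root_.add_apply, h.eq_integral, h'.eq_integral]
    exact (intervalIntegral.integral_add
      ((continuous_transportCurve_comp_gh hΦ t p).intervalIntegrable _ _)
      ((continuous_transportCurve_comp_gh hΦ' t p).intervalIntegrable _ _)).symm
  hasPointwiseDerivOn t ht p := by
    refine ((h.hasPointwiseDerivOn t ht p).add (h'.hasPointwiseDerivOn t ht p)).congr_deriv ?_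
    simp only [map_add, _root_.add_apply, _root_.sub_apply]
    ring

theorem exists_isDuhamelSolution {Φ : ℝ → 𝓢(ℝ × ℝ, ℂ)} (hΦ : Φ ∈ transportCurves) :
    ∃ Ψ ∈ transportCurves, IsDuhamelSolution Φ Ψ := by
  refine transportCurves_induction (fun h F hcont hgrowth => ?_) (fun Φ hΦ Ψ hΨ => ?_) hΦ
  · exact ⟨_, smul_harmonicTransport_mem_transportCurves
      (intervalIntegral.continuous_primitive hcont.intervalIntegrable 0) hgrowth.integral F,
      isDuhamelSolution_smul_harmonicTransport hcont F⟩
  · rintro ⟨Φ', hΦ', hduhamel⟩ ⟨Ψ', hΨ', hduhamel'⟩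
    exact ⟨_, transportCurves.add_mem hΦ' hΨ', hduhamel.add hduhamel' hΦ hΨ⟩

end TransportCurves

section HarmonicExpansion

open Set
open scoped SchwartzMap

variable {V : ℝ → ℝ} {n l : ℕ} {f₀ : 𝓢(ℝ × ℝ, ℂ)} {ζ : ℕ → ℝ → 𝓢(ℝ × ℝ, ℂ)}
  {Z : ℕ → ℝ → ℝ × ℝ → ℂ} {δ : ℝ}

/-- The source term `∑ B_ν ζ_{l-ν}` driving the term of order `l` of the expansion. -/
noncomputable def expansionSource (V : ℝ → ℝ) (n : ℕ) (ζ : ℕ → ℝ → 𝓢(ℝ × ℝ, ℂ)) (l : ℕ) (t : ℝ) :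
    𝓢(ℝ × ℝ, ℂ) :=
  ∑ ν ∈ Finset.Icc 1 (min l n), correctionOp V ν (ζ (l - ν) t)

/-- The family `ζ` of transport curves solves the hierarchy of equations obtained by inserting
`∑ δ ^ l ζ_l` into the dilated Wigner equation with initial value `f₀`. -/
structure IsHarmonicExpansion (V : ℝ → ℝ) (n : ℕ) (f₀ : 𝓢(ℝ × ℝ, ℂ))
    (ζ : ℕ → ℝ → 𝓢(ℝ × ℝ, ℂ)) : Prop where
  mem_transportCurves : ∀ l, ζ l ∈ transportCurves
  hasPointwiseDerivOn : ∀ l, HasPointwiseDerivOn (ζ l)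
    (fun t => -(harmonicOp (ζ l t) + expansionSource V n ζ l t)) univ
  zero_zero : ζ 0 0 = f₀
  apply_zero_of_pos : ∀ l, 1 ≤ l → ζ l 0 = 0

theorem expansionSource_mem_transportCurves (hζ : ∀ k < l, ζ k ∈ transportCurves) :
    expansionSource V n ζ l ∈ transportCurves := by
  have hmem := sum_mem (t := Finset.Icc 1 (min l n)) fun ν hν =>
    correctionOp_mem_transportCurvePreservers V ν (ζ (l - ν)) (hζ _ (by grind))
  rwa [Finset.sum_fn] at hmem

theorem exists_isDuhamelSolution_of_recursion (hζ : ∀ k < l, ζ k ∈ transportCurves)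
    (hZ : ∀ k < l, ∀ t p, Z k t p = ζ k t p)
    (hrec : ∀ t p, Z l t p = -∫ s in (0 : ℝ)..t,
      ∑ ν ∈ Finset.Icc 1 (min l n), Bop V ν (Z (l - ν) s) (gh (-(t - s)) p)) :
    ∃ Ψ ∈ transportCurves, IsDuhamelSolution (expansionSource V n ζ l) Ψ ∧
      ∀ t p, Z l t p = -Ψ t p := by
  obtain ⟨Ψ, hΨ, hduhamel⟩ :=
    exists_isDuhamelSolution (expansionSource_mem_transportCurves (V := V) (n := n) hζ)
  refine ⟨Ψ, hΨ, hduhamel, fun t p => ?_⟩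
  rw [hrec, hduhamel.eq_integral]
  refine congrArg _ (intervalIntegral.integral_congr fun s _ => ?_)
  simp only [expansionSource, _root_.sum_apply]
  refine Finset.sum_congr rfl fun ν hν => ?_
  rw [funext (hZ (l - ν) (by grind) s), Bop_eq_correctionOp]

theorem exists_transportCurve_of_recursion (hZ0 : ∀ t p, Z 0 t p = f₀ (gh (-t) p))
    (hrec : ∀ l, 1 ≤ l → ∀ t p, Z l t p = -∫ s in (0 : ℝ)..t,
      ∑ ν ∈ Finset.Icc 1 (min l n), Bop V ν (Z (l - ν) s) (gh (-(t - s)) p)) (l : ℕ) :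
    ∃ Ψ ∈ transportCurves, ∀ t p, Z l t p = Ψ t p := by
  induction l using Nat.strong_induction_on with
  | _ l ih =>
    rcases l.eq_zero_or_pos with rfl | hl
    · exact ⟨_, harmonicTransport_mem_transportCurves f₀, hZ0⟩
    choose! ζ hζ hZ using ih
    obtain ⟨Ψ, hΨ, -, hZΨ⟩ := exists_isDuhamelSolution_of_recursion hζ hZ (hrec l hl)
    exact ⟨-Ψ, transportCurves.neg_mem hΨ, hZΨ⟩

theorem exists_isHarmonicExpansion (hZ0 : ∀ t p, Z 0 t p = f₀ (gh (-t) p))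
    (hrec : ∀ l, 1 ≤ l → ∀ t p, Z l t p = -∫ s in (0 : ℝ)..t,
      ∑ ν ∈ Finset.Icc 1 (min l n), Bop V ν (Z (l - ν) s) (gh (-(t - s)) p)) :
    ∃ ζ, IsHarmonicExpansion V n f₀ ζ ∧ ∀ l t p, Z l t p = ζ l t p := by
  choose ζ hζ hZ using exists_transportCurve_of_recursion hZ0 hrec
  have hζ0 : ζ 0 = fun t => harmonicTransport t f₀ := by
    ext t p
    rw [← hZ, hZ0, harmonicTransport_apply]
  have hζsucc : ∀ l, 1 ≤ l → ∃ Ψ, IsDuhamelSolution (expansionSource V n ζ l) Ψ ∧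
      ζ l = fun t => -Ψ t := fun l hl => by
    obtain ⟨Ψ, -, hduhamel, hZΨ⟩ :=
      exists_isDuhamelSolution_of_recursion (fun k _ => hζ k) (fun k _ => hZ k) (hrec l hl)
    refine ⟨Ψ, hduhamel, ?_⟩
    ext t p
    rw [← hZ, hZΨ, _root_.neg_apply]
  refine ⟨ζ, ⟨hζ, fun l => ?_, ?_, fun l hl => ?_⟩, hZ⟩
  · rcases l.eq_zero_or_pos with rfl | hl
    · rw [hζ0]
      intro t _ p
      simpa [expansionSource] using hasDerivAt_harmonicTransport f₀ p t
    · obtain ⟨Ψ, hduhamel, hζΨ⟩ := hζsucc l hl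
      intro t ht p
      rw [hζΨ]
      refine (hduhamel.hasPointwiseDerivOn t ht p).neg.congr_deriv ?_
      simp only [map_neg, _root_.neg_apply, _root_.add_apply, _root_.sub_apply]
      ring
  · simp only [hζ0, harmonicTransport_zero]
  · obtain ⟨Ψ, hduhamel, hζΨ⟩ := hζsucc l hl
    ext p
    simp [hζΨ, hduhamel.eq_integral]

/-- The partial sum of order `N` of the expansion in powers of `δ = √ε`. -/
noncomputable def truncatedExpansion (ζ : ℕ → ℝ → 𝓢(ℝ × ℝ, ℂ)) (N : ℕ) (δ t : ℝ) :
    𝓢(ℝ × ℝ, ℂ) :=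
  ∑ l ∈ Finset.range (N + 1), ((δ ^ l : ℝ) : ℂ) • ζ l t

/-- The terms of order greater than `N` that are left when the truncated expansion is inserted
into the equation. -/
noncomputable def expansionResidual (V : ℝ → ℝ) (n : ℕ) (ζ : ℕ → ℝ → 𝓢(ℝ × ℝ, ℂ)) (N : ℕ)
    (δ t : ℝ) : 𝓢(ℝ × ℝ, ℂ) :=
  ∑ q ∈ Finset.range (N + 1) ×ˢ Finset.Icc 1 n with N < q.1 + q.2,
    ((δ ^ (q.1 + q.2) : ℝ) : ℂ) • correctionOp V q.2 (ζ q.1 t)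

theorem sum_range_sum_Icc_min {M : Type*} [AddCommMonoid M] (N n : ℕ) (F : ℕ → ℕ → M) :
    ∑ l ∈ Finset.range (N + 1), ∑ ν ∈ Finset.Icc 1 (min l n), F (l - ν) ν =
      ∑ q ∈ Finset.range (N + 1) ×ˢ Finset.Icc 1 n with q.1 + q.2 ≤ N, F q.1 q.2 := by
  rw [Finset.sum_sigma']
  refine Finset.sum_nbij' (fun q => (q.1 - q.2, q.2)) (fun q => ⟨q.1 + q.2, q.2⟩) ?_ ?_ ?_ ?_ ?_
  all_goals grind

theorem sum_smul_expansionSource_add_expansionResidual (V : ℝ → ℝ) (n : ℕ)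
    (ζ : ℕ → ℝ → 𝓢(ℝ × ℝ, ℂ)) (N : ℕ) (δ t : ℝ) :
    ∑ l ∈ Finset.range (N + 1), ((δ ^ l : ℝ) : ℂ) • expansionSource V n ζ l t +
        expansionResidual V n ζ N δ t =
      ∑ ν ∈ Finset.Icc 1 n, ((δ ^ ν : ℝ) : ℂ) • correctionOp V ν (truncatedExpansion ζ N δ t) := by
  have hlow : ∑ l ∈ Finset.range (N + 1), ((δ ^ l : ℝ) : ℂ) • expansionSource V n ζ l t =
      ∑ q ∈ Finset.range (N + 1) ×ˢ Finset.Icc 1 n with q.1 + q.2 ≤ N,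
        ((δ ^ (q.1 + q.2) : ℝ) : ℂ) • correctionOp V q.2 (ζ q.1 t) := by
    rw [← sum_range_sum_Icc_min N n fun k ν => ((δ ^ (k + ν) : ℝ) : ℂ) • correctionOp V ν (ζ k t)]
    refine Finset.sum_congr rfl fun l _ => ?_
    rw [expansionSource, Finset.smul_sum]
    refine Finset.sum_congr rfl fun ν hν => ?_
    rw [Nat.sub_add_cancel (by grind)]
  have hsplit := Finset.sum_filter_add_sum_filter_not (Finset.range (N + 1) ×ˢ Finset.Icc 1 n)
    (fun q => q.1 + q.2 ≤ N) fun q => ((δ ^ (q.1 + q.2) : ℝ) : ℂ) • correctionOp V q.2 (ζ q.1 t)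
  simp only [not_le] at hsplit
  rw [hlow, expansionResidual, hsplit, Finset.sum_product_right]
  simp only [truncatedExpansion, map_sum, map_smul, Finset.smul_sum, smul_smul, pow_add,
    Complex.ofReal_mul, mul_comm]

theorem IsHarmonicExpansion.hasPointwiseDerivOn_truncatedExpansion
    (hζ : IsHarmonicExpansion V n f₀ ζ) (N : ℕ) (δ : ℝ) :
    HasPointwiseDerivOn (truncatedExpansion ζ N δ)
      (fun t => wignerGenerator V n δ (truncatedExpansion ζ N δ t) + expansionResidual V n ζ N δ t)
      univ := by
  intro t ht p
  have hderiv : wignerGenerator V n δ (truncatedExpansion ζ N δ t) + expansionResidual V n ζ N δ t =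
      ∑ l ∈ Finset.range (N + 1),
        ((δ ^ l : ℝ) : ℂ) • -(harmonicOp (ζ l t) + expansionSource V n ζ l t) := by
    rw [wignerGenerator_apply, ← sum_smul_expansionSource_add_expansionResidual]
    simp only [truncatedExpansion, map_sum, map_smul, smul_neg, smul_add, Finset.sum_neg_distrib,
      Finset.sum_add_distrib]
    abel
  beta_reduce
  rw [hderiv]
  simp only [truncatedExpansion, _root_.sum_apply]
  exact HasDerivWithinAt.fun_sum fun l _ =>
    (hζ.hasPointwiseDerivOn l t ht p).const_smul ((δ ^ l : ℝ) : ℂ)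

theorem expansionResidual_mem_transportCurves (hζ : ∀ l, ζ l ∈ transportCurves) (V : ℝ → ℝ)
    (n N : ℕ) (δ : ℝ) : expansionResidual V n ζ N δ ∈ transportCurves := by
  have hmem := sum_mem (t := {q ∈ Finset.range (N + 1) ×ˢ Finset.Icc 1 n | N < q.1 + q.2})
    fun q _ => transportCurves.smul_mem ((δ ^ (q.1 + q.2) : ℝ) : ℂ)
      (correctionOp_mem_transportCurvePreservers V q.2 _ (hζ q.1))
  rwa [Finset.sum_fn] at hmem

theorem truncatedExpansion_mem_transportCurves (hζ : ∀ l, ζ l ∈ transportCurves) (N : ℕ) (δ : ℝ) :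
    truncatedExpansion ζ N δ ∈ transportCurves := by
  have hmem := sum_mem (t := Finset.range (N + 1)) fun l _ =>
    transportCurves.smul_mem ((δ ^ l : ℝ) : ℂ) (hζ l)
  rwa [Finset.sum_fn] at hmem

theorem IsHarmonicExpansion.truncatedExpansion_zero (hζ : IsHarmonicExpansion V n f₀ ζ) (N : ℕ)
    (δ : ℝ) : truncatedExpansion ζ N δ 0 = f₀ := by
  rw [truncatedExpansion, Finset.sum_eq_single_of_mem 0 (by simp) fun l _ hl => by
    rw [hζ.apply_zero_of_pos l (Nat.one_le_iff_ne_zero.2 hl), smul_zero]]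
  simp [hζ.zero_zero]

theorem norm_schwartzToL2_expansionResidual_le (V : ℝ → ℝ) (n : ℕ) (ζ : ℕ → ℝ → 𝓢(ℝ × ℝ, ℂ))
    (N : ℕ) (hδ : δ ∈ Icc (0 : ℝ) 1) (t : ℝ) :
    ‖schwartzToL2 volume (expansionResidual V n ζ N δ t)‖ ≤
      δ ^ (N + 1) * ∑ q ∈ Finset.range (N + 1) ×ˢ Finset.Icc 1 n with N < q.1 + q.2,
        ‖schwartzToL2 volume (correctionOp V q.2 (ζ q.1 t))‖ := by
  rw [expansionResidual, map_sum, Finset.mul_sum]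
  refine norm_sum_le_of_le _ fun q hq => ?_
  rw [map_smul, norm_smul, Complex.norm_real, Real.norm_of_nonneg (pow_nonneg hδ.1 _)]
  exact mul_le_mul_of_nonneg_right
    (pow_le_pow_of_le_one hδ.1 hδ.2 (Finset.mem_filter.1 hq).2) (norm_nonneg _)

theorem exists_norm_expansionResidual_le (hζ : ∀ l, ζ l ∈ transportCurves) (V : ℝ → ℝ)
    (n N : ℕ) :
    ∃ (C : ℝ) (m : ℕ), 0 ≤ C ∧ ∀ δ ∈ Icc (0 : ℝ) 1, ∀ T, ∀ t ∈ Icc 0 T,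
      ‖schwartzToL2 volume (expansionResidual V n ζ N δ t)‖ ≤ δ ^ (N + 1) * (C * (1 + T) ^ m) := by
  have hgrowth := HasPolyGrowth.sum
    (s := {q ∈ Finset.range (N + 1) ×ˢ Finset.Icc 1 n | N < q.1 + q.2}) fun q _ =>
      (hasPolyGrowth_schwartzToL2_of_mem_transportCurves
        (correctionOp_mem_transportCurvePreservers V q.2 _ (hζ q.1))).norm
  obtain ⟨C, m, hC, hbound⟩ := hgrowth.exists_forall_mem_Icc_norm_le
  refine ⟨C, m, hC, fun δ hδ T t ht => ?_⟩
  refine (norm_schwartzToL2_expansionResidual_le V n ζ N hδ t).trans ?_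
  exact mul_le_mul_of_nonneg_left ((Real.le_norm_self _).trans (hbound T t ht))
    (pow_nonneg hδ.1 _)

theorem IsHarmonicExpansion.exists_norm_sub_truncatedExpansion_le
    (hζ : IsHarmonicExpansion V n f₀ ζ) (N : ℕ) :
    ∃ C : ℝ, ∀ δ ∈ Icc (0 : ℝ) 1, ∀ φ : ℝ → 𝓢(ℝ × ℝ, ℂ), φ 0 = f₀ →
      HasPointwiseDerivOn φ (fun t => wignerGenerator V n δ (φ t)) (Ici 0) → ∀ T, 0 ≤ T →
      ‖schwartzToL2 volume (φ T - truncatedExpansion ζ N δ T)‖ ≤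
        C * Real.exp T * δ ^ (N + 1) := by
  obtain ⟨C, m, hC, hresidual⟩ := exists_norm_expansionResidual_le hζ.mem_transportCurves V n N
  refine ⟨C * ((m + 1).factorial * Real.exp 1), fun δ hδ φ hφ0 hφ T hT => ?_⟩
  obtain ⟨K, k, -, hderiv⟩ := (hasPolyGrowth_schwartzToL2_of_mem_transportCurves
    (transportCurves.add_mem
      (wignerGenerator_mem_transportCurvePreservers V n δ _
        (truncatedExpansion_mem_transportCurves hζ.mem_transportCurves N δ))
      (expansionResidual_mem_transportCurves hζ.mem_transportCurves V n N δ))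
    ).exists_forall_mem_Icc_norm_le
  have henergy := norm_sub_le_of_skew_evolution_of_residual
    (isFormalAdjoint_wignerGenerator V n δ) hφ hT
    ((hζ.hasPointwiseDerivOn_truncatedExpansion N δ).mono (subset_univ _))
    (fun t ht => hderiv T t (Ioo_subset_Icc_self ht)) (hresidual δ hδ T)
    (hφ0.trans (hζ.truncatedExpansion_zero N δ).symm)
  calc ‖schwartzToL2 volume (φ T - truncatedExpansion ζ N δ T)‖
      ≤ δ ^ (N + 1) * (C * (1 + T) ^ m) * (T - 0) := henergy
    _ = δ ^ (N + 1) * (C * ((1 + T) ^ m * T)) := by ring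
    _ ≤ δ ^ (N + 1) * (C * ((m + 1).factorial * Real.exp 1 * Real.exp T)) :=
        mul_le_mul_of_nonneg_left
          (mul_le_mul_of_nonneg_left (one_add_pow_mul_le_exp hT m) hC) (pow_nonneg hδ.1 _)
    _ = C * ((m + 1).factorial * Real.exp 1) * Real.exp T * δ ^ (N + 1) := by ring

end HarmonicExpansion

theorem rpow_natCast_div_two {x : ℝ} (hx : 0 ≤ x) (k : ℕ) : x ^ ((k : ℝ) / 2) = √x ^ k := by
  rw [Real.sqrt_eq_rpow, ← Real.rpow_mul_natCast hx, one_div_mul_eq_div]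

theorem exists_hasPointwiseDerivOn_of_wigner {V : ℝ → ℝ} {n : ℕ} {δ : ℝ} {w : ℝ → ℝ × ℝ → ℂ}
    (hschwartz : ∀ t, 0 ≤ t → ∃ φ : SchwartzMap (ℝ × ℝ) ℂ, ∀ p, φ p = w t p)
    (hpde : ∀ t, 0 ≤ t → ∀ p, HasDerivWithinAt (fun s => w s p)
      (-(Lh (w t) p + ∑ ν ∈ Finset.Icc 1 n, ((δ ^ ν : ℝ) : ℂ) * Bop V ν (w t) p))
      (Set.Ici 0) t) :
    ∃ φ : ℝ → SchwartzMap (ℝ × ℝ) ℂ, (∀ t, 0 ≤ t → ∀ p, φ t p = w t p) ∧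
      HasPointwiseDerivOn φ (fun t => wignerGenerator V n δ (φ t)) (Set.Ici 0) := by
  choose! φ hφ using hschwartz
  refine ⟨φ, hφ, fun t ht p => ?_⟩
  rw [wignerGenerator_apply_apply, funext (hφ t ht)]
  exact (hpde t ht p).congr (fun s hs => hφ s hs p) (hφ t ht p)

theorem harmonic_expansion_remainder_L2_general
    (V : ℝ → ℝ) (n : ℕ) (f0 : SchwartzMap (ℝ × ℝ) ℂ) (W : ℝ → ℝ → ℝ × ℝ → ℂ)
    (hW0 : ∀ ε ∈ Set.Ioc (0 : ℝ) 1, ∀ p : ℝ × ℝ, W ε 0 p = f0 p)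
    (hWschwartz : ∀ ε ∈ Set.Ioc (0 : ℝ) 1, ∀ t : ℝ, 0 ≤ t →
      ∃ φ : SchwartzMap (ℝ × ℝ) ℂ, ∀ p : ℝ × ℝ, φ p = W ε t p)
    (hWpde : ∀ ε ∈ Set.Ioc (0 : ℝ) 1, ∀ t : ℝ, 0 ≤ t → ∀ p : ℝ × ℝ,
      HasDerivWithinAt (fun s => W ε s p)
        (-(Lh (W ε t) p + ∑ ν ∈ Finset.Icc 1 n,
            ((ε ^ ((ν : ℝ) / 2) : ℝ) : ℂ) * Bop V ν (W ε t) p)) (Set.Ici 0) t)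
    (Z : ℕ → ℝ → ℝ × ℝ → ℂ)
    (hZ0 : ∀ (t : ℝ) (p : ℝ × ℝ), Z 0 t p = f0 (gh (-t) p))
    (hZrec : ∀ l : ℕ, 1 ≤ l → ∀ (t : ℝ) (p : ℝ × ℝ), Z l t p =
      -∫ s in (0 : ℝ)..t, ∑ ν ∈ Finset.Icc 1 (min l n),
        Bop V ν (Z (l - ν) s) (gh (-(t - s)) p))
    (N : ℕ) :
    ∃ C : ℝ, ∀ ε ∈ Set.Ioc (0 : ℝ) 1, ∀ t : ℝ, 0 ≤ t →
      Real.sqrt (∫ p : ℝ × ℝ,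
          ‖W ε t p - ∑ l ∈ Finset.range (N + 1), ((ε ^ ((l : ℝ) / 2) : ℝ) : ℂ) * Z l t p‖ ^ 2)
        ≤ C * Real.exp t * ε ^ (((N : ℝ) + 1) / 2) := by
  obtain ⟨ζ, hζ, hZζ⟩ := exists_isHarmonicExpansion hZ0 hZrec
  obtain ⟨C, hC⟩ := hζ.exists_norm_sub_truncatedExpansion_le N
  refine ⟨C, fun ε hε t ht => ?_⟩
  have hhalf : ∀ k : ℕ, ε ^ ((k : ℝ) / 2) = √ε ^ k := rpow_natCast_div_two hε.1.le
  have hδ : √ε ∈ Set.Icc 0 1 := ⟨Real.sqrt_nonneg ε, Real.sqrt_le_one.2 hε.2⟩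
  obtain ⟨φ, hφ, hφderiv⟩ := exists_hasPointwiseDerivOn_of_wigner (δ := √ε) (hWschwartz ε hε)
    (by simpa only [hhalf] using hWpde ε hε)
  have hφ0 : φ 0 = f0 := by
    ext p
    rw [hφ 0 le_rfl, hW0 ε hε]
  have hremainder : ∀ p, W ε t p - ∑ l ∈ Finset.range (N + 1), ((ε ^ ((l : ℝ) / 2) : ℝ) : ℂ) *
      Z l t p = (φ t - truncatedExpansion ζ N √ε t) p := fun p => by
    simp only [truncatedExpansion, _root_.sub_apply, _root_.sum_apply, _root_.smul_apply,
      smul_eq_mul, hφ t ht, hZζ, hhalf]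
  simp only [hremainder]
  rw [← norm_sq_schwartzToL2, Real.sqrt_sq (norm_nonneg _), ← Nat.cast_add_one, hhalf]
  exact hC √ε hδ φ hφ0 hφderiv t ht

/-- Remainder estimate for the harmonic expansion of the solution of the dilated Wigner equation
`∂_t W̃^ε + (L_h + Σ_{ν=1}^{d-2} ε^{ν/2} B_ν) W̃^ε = 0` with ε-independent Schwartz initial data:
for every `N` there is `C_N` with `‖W̃^ε(t) - Σ_{l=0}^N ε^{l/2} Z^{(l)}(t)‖_{L²} ≤ C_N e^t ε^{(N+1)/2}`
for all `t ≥ 0` and `ε ∈ (0,1]`. -/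
theorem harmonic_expansion_remainder_L2
    (V : Polynomial ℝ) (d : ℕ) (hd : 3 ≤ d) (hdeg : V.natDegree = d)
    (hV0 : V.eval 0 = 0) (hV1 : (Polynomial.derivative V).eval 0 = 0)
    (hV2 : (Polynomial.derivative (Polynomial.derivative V)).eval 0 = 1)
    (f0 : SchwartzMap (ℝ × ℝ) ℂ)
    (W : ℝ → ℝ → ℝ × ℝ → ℂ)
    (hW0 : ∀ ε ∈ Set.Ioc (0 : ℝ) 1, ∀ p : ℝ × ℝ, W ε 0 p = f0 p)
    (hWschwartz : ∀ ε ∈ Set.Ioc (0 : ℝ) 1, ∀ t : ℝ, 0 ≤ t →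
      ∃ φ : SchwartzMap (ℝ × ℝ) ℂ, ∀ p : ℝ × ℝ, φ p = W ε t p)
    (hWpde : ∀ ε ∈ Set.Ioc (0 : ℝ) 1, ∀ t : ℝ, 0 ≤ t → ∀ p : ℝ × ℝ,
      HasDerivAt (fun s => W ε s p)
        (-(Lh (W ε t) p + ∑ ν ∈ Finset.Icc 1 (d - 2),
            ((ε ^ ((ν : ℝ) / 2) : ℝ) : ℂ) * Bop (fun x => V.eval x) ν (W ε t) p)) t)
    (Z : ℕ → ℝ → ℝ × ℝ → ℂ)
    (hZ0 : ∀ (t : ℝ) (p : ℝ × ℝ), Z 0 t p = f0 (gh (-t) p))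
    (hZrec : ∀ l : ℕ, 1 ≤ l → ∀ (t : ℝ) (p : ℝ × ℝ), Z l t p =
      -∫ s in (0 : ℝ)..t, ∑ ν ∈ Finset.Icc 1 (min l (d - 2)),
        Bop (fun x => V.eval x) ν (Z (l - ν) s) (gh (-(t - s)) p))
    (N : ℕ) :
    ∃ C : ℝ, ∀ ε ∈ Set.Ioc (0 : ℝ) 1, ∀ t : ℝ, 0 ≤ t →
      Real.sqrt (∫ p : ℝ × ℝ,
          ‖W ε t p - ∑ l ∈ Finset.range (N + 1), ((ε ^ ((l : ℝ) / 2) : ℝ) : ℂ) * Z l t p‖ ^ 2)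
        ≤ C * Real.exp t * ε ^ (((N : ℝ) + 1) / 2) := by
  exact harmonic_expansion_remainder_L2_general (fun x => V.eval x) (d - 2) f0 W hW0 hWschwartz
    (fun ε hε t ht p => (hWpde ε hε t ht p).hasDerivWithinAt) Z hZ0 hZrec N
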